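/- In the square decomposition I² = D₁ ∪ D₂ ∪ K with K linearly ordered (minimum a, maximum b), the order has no gaps from either side: for every z₀ ∈ K \ {b} and ε > 0 there exists z₁ ∈ K with z₀ < z₁ and ρ_K(z₀, z₁) < ε; and for every z₀ ∈ K \ {a} and ε > 0 there exists z₂ ∈ K with z₂ < z₀ and ρ_K(z₂, z₀) < ε. In particular, K has no isolated points except possibly none, and the order is dense-in-itself from both sides at non-extreme points. -/

import Mathlib

/-- The unit square `I² = [0,1] × [0,1]` in the plane. -/
def unitSq : Set (ℝ × ℝ) := Set.Icc (0, 0) (1, 1)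

/-- The open bottom edge `(0,1) × {0}` of the unit square. -/
def botEdge : Set (ℝ × ℝ) := {p | p.1 ∈ Set.Ioo (0 : ℝ) 1 ∧ p.2 = 0}

/-- The open top edge `(0,1) × {1}` of the unit square. -/
def topEdge : Set (ℝ × ℝ) := {p | p.1 ∈ Set.Ioo (0 : ℝ) 1 ∧ p.2 = 1}

/-- The open left edge `{0} × (0,1)` of the unit square. -/
def leftEdge : Set (ℝ × ℝ) := {p | p.1 = 0 ∧ p.2 ∈ Set.Ioo (0 : ℝ) 1}

/-- The open right edge `{1} × (0,1)` of the unit square. -/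
def rightEdge : Set (ℝ × ℝ) := {p | p.1 = 1 ∧ p.2 ∈ Set.Ioo (0 : ℝ) 1}

/-- Accessibility of a boundary point from an open set. -/
def Accessible {X : Type*} [TopologicalSpace X] (U : Set X) (x : X) : Prop :=
  ∃ φ : unitInterval → X, Continuous φ ∧ Function.Injective φ ∧
    (∀ t, φ t ∈ closure U) ∧ (∀ t : unitInterval, (t : ℝ) < 1 → φ t ∈ U) ∧ φ 1 = x

/-- The midpoint parameter `1/2` of the unit interval. -/
noncomputable def half : unitInterval := ⟨1/2, by constructor <;> norm_num⟩

/-- A *crosscut* of the square through `x` (relative to the decomposition pieces `D₁`, `D₂`):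
a continuous injective path from the open bottom edge to the open top edge, passing through
`x` at parameter `1/2`, lying in the open square except for its endpoints, with its first
half in `D₁` and its second half in `D₂`. -/
def IsCrosscut (D₁ D₂ : Set (ℝ × ℝ)) (x : ℝ × ℝ) (φ : unitInterval → ℝ × ℝ) : Prop :=
  Continuous φ ∧ Function.Injective φ ∧ φ 0 ∈ botEdge ∧ φ 1 ∈ topEdge ∧ φ half = x ∧
    (∀ t : unitInterval, 0 < (t : ℝ) → (t : ℝ) < 1 → φ t ∈ interior unitSq) ∧
    (∀ t : unitInterval, (t : ℝ) < 1/2 → φ t ∈ D₁) ∧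
    (∀ t : unitInterval, 1/2 < (t : ℝ) → φ t ∈ D₂)

/-- The standard square decomposition `I² = D₁ ∪ D₂ ∪ K`. -/
structure SqDecomp (D₁ D₂ K : Set (ℝ × ℝ)) (a b : ℝ × ℝ) : Prop where
  cover : unitSq = D₁ ∪ D₂ ∪ K
  disj : Disjoint D₁ D₂
  open₁ : ∃ U, IsOpen U ∧ D₁ = U ∩ unitSq
  open₂ : ∃ U, IsOpen U ∧ D₂ = U ∩ unitSq
  pconn₁ : IsPathConnected D₁
  pconn₂ : IsPathConnected D₂
  front₁ : K = closure D₁ \ D₁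
  front₂ : K = closure D₂ \ D₂
  acc₁ : ∀ x ∈ K, Accessible D₁ x
  acc₂ : ∀ x ∈ K, Accessible D₂ x
  bdry : K ∩ frontier unitSq = {a, b}
  ha : a ∈ leftEdge
  hb : b ∈ rightEdge

/-- The closed disk bounded by a crosscut `φ` and containing the left edge: the closure of
the connected component of `I² \ φ(I)` containing the left edge. -/
def H₁ (φ : unitInterval → ℝ × ℝ) : Set (ℝ × ℝ) :=
  closure (connectedComponentIn (unitSq \ Set.range φ) ((0 : ℝ), (1/2 : ℝ)))

/-- The crosscut-induced order on `K`: `y ≤ x` iff `y = a`, or `x = b`, or `y` lies in the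
closed disk cut off by some crosscut through `x` on the side of the left edge. -/
def kle (D₁ D₂ : Set (ℝ × ℝ)) (a b : ℝ × ℝ) (y x : ℝ × ℝ) : Prop :=
  y = a ∨ x = b ∨ ∃ φ : unitInterval → ℝ × ℝ, IsCrosscut D₁ D₂ x φ ∧ y ∈ H₁ φ

open Set Metric Filter Topology

/-- The identification of the plane `ℝ × ℝ` with `ℂ`. -/
def planeToComplex (z : ℝ × ℝ) : ℂ := ⟨z.1, z.2⟩

lemma continuous_planeToComplex : Continuous planeToComplex :=
  Complex.equivRealProdCLM.symm.continuous

lemma planeToComplex_injective : Function.Injective planeToComplex :=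
  Complex.equivRealProdCLM.symm.injective

lemma dist_le_norm_planeToComplex_sub (z w : ℝ × ℝ) :
    dist z w ≤ ‖planeToComplex z - planeToComplex w‖ := by
  rw [Prod.dist_eq, Real.dist_eq, Real.dist_eq]
  exact max_le (by simpa [planeToComplex] using
    Complex.abs_re_le_norm (planeToComplex z - planeToComplex w))
    (by simpa [planeToComplex] using
      Complex.abs_im_le_norm (planeToComplex z - planeToComplex w))

lemma norm_planeToComplex_sub_le (z w : ℝ × ℝ) :
    ‖planeToComplex z - planeToComplex w‖ ≤ 2 * dist z w := by
  have h := Complex.norm_le_abs_re_add_abs_im (planeToComplex z - planeToComplex w)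
  have h1 : |z.1 - w.1| ≤ dist z w := by
    rw [Prod.dist_eq, Real.dist_eq]; exact le_max_left _ _
  have h2 : |z.2 - w.2| ≤ dist z w := by
    rw [Prod.dist_eq, Real.dist_eq, Real.dist_eq]; exact le_max_right _ _
  simp only [planeToComplex, Complex.sub_re, Complex.sub_im] at h
  simp only [planeToComplex]
  linarith

/-- `p` and `q` lie in a common connected set missing `C`. -/
def Unseparated (C : Set (ℝ × ℝ)) (p q : ℝ × ℝ) : Prop :=
  ∃ S, IsPreconnected S ∧ Disjoint S C ∧ p ∈ S ∧ q ∈ S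

/-- The map `z ↦ (z - p) / (z - q)` has a continuous logarithm on `C`. -/
def HasLogRatio (C : Set (ℝ × ℝ)) (p q : ℝ × ℝ) : Prop :=
  ∃ g : ℝ × ℝ → ℂ, ContinuousOn g C ∧ ∀ z ∈ C, Complex.exp (g z) *
    (planeToComplex z - planeToComplex q) = planeToComplex z - planeToComplex p

namespace Unseparated

variable {C C' : Set (ℝ × ℝ)} {p q r : ℝ × ℝ}

lemma symm (h : Unseparated C p q) : Unseparated C q p := by
  obtain ⟨S, h1, h2, h3, h4⟩ := h
  exact ⟨S, h1, h2, h4, h3⟩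

lemma trans (h : Unseparated C p q) (h' : Unseparated C q r) : Unseparated C p r := by
  obtain ⟨S, h1, h2, h3, h4⟩ := h
  obtain ⟨S', h1', h2', h3', h4'⟩ := h'
  exact ⟨S ∪ S', h1.union q h4 h3' h1', h2.union_left h2', Or.inl h3, Or.inr h4'⟩

lemma mono (h : Unseparated C p q) (hC : C' ⊆ C) : Unseparated C' p q := by
  obtain ⟨S, h1, h2, h3, h4⟩ := h
  exact ⟨S, h1, h2.mono_right hC, h3, h4⟩

lemma left_notMem (h : Unseparated C p q) : p ∉ C := by
  obtain ⟨S, h1, h2, h3, h4⟩ := h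
  exact fun hp => Set.disjoint_left.1 h2 h3 hp

lemma of_convex {S : Set (ℝ × ℝ)} (hS : Convex ℝ S) (hd : Disjoint S C) (hp : p ∈ S)
    (hq : q ∈ S) : Unseparated C p q :=
  ⟨S, hS.isPreconnected, hd, hp, hq⟩

/-- A point off a closed set is unseparated from all nearby points. -/
lemma eventually_of_notMem (hC : IsClosed C) (hp : p ∉ C) : ∀ᶠ w in 𝓝 p, Unseparated C p w := by
  obtain ⟨ε, hε, hb⟩ := Metric.isOpen_iff.1 hC.isOpen_compl p hp
  filter_upwards [Metric.ball_mem_nhds p hε] with w hw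
  exact of_convex (convex_ball p ε) (Set.disjoint_left.2 fun z hz => hb hz)
    (Metric.mem_ball_self hε) hw

lemma isOpen_setOf (hC : IsClosed C) : IsOpen {w | Unseparated C p w} := by
  rw [isOpen_iff_mem_nhds]
  intro w hw
  filter_upwards [eventually_of_notMem hC hw.symm.left_notMem] with v hv
  exact Unseparated.trans hw hv

lemma of_mem_closure (hC : IsClosed C) (hq : q ∈ closure {w | Unseparated C p w}) (h : q ∉ C) :
    Unseparated C p q := by
  obtain ⟨w, h1, h2⟩ := mem_closure_iff_nhds.1 hq _ (eventually_of_notMem hC h)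
  exact Unseparated.trans h2 h1.symm

/-- The component of `p` in the complement of `C`. -/
lemma isPreconnected_setOf : IsPreconnected {w | Unseparated C p w} := by
  apply isPreconnected_of_forall p
  rintro w ⟨S, h1, h2, h3, h4⟩
  exact ⟨S, fun v hv => ⟨S, h1, h2, h3, hv⟩, h3, h4, h1⟩

/-- If adding to `C'` a part inside the open set `B` separates `p` from `q`, then the component
of `p` reaches `B`. -/
lemma or_exists_mem {B : Set (ℝ × ℝ)} (hC : IsClosed C) (hB : IsOpen B) (hCB : C ⊆ C' ∪ B)
    (h : Unseparated C' p q) (hp : p ∉ C) :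
    Unseparated C p q ∨ ∃ w ∈ B, Unseparated C p w := by
  by_contra! hcon
  obtain ⟨hpq, hw⟩ := hcon
  obtain ⟨S, hS, hd, hpS, hqS⟩ := h
  have hself : p ∈ {w | Unseparated C p w} := (eventually_of_notMem hC hp).self_of_nhds
  refine hpq (hS.subset_of_closure_inter_subset (isOpen_setOf hC (p := p)) ⟨p, hpS, hself⟩ ?_ hqS)
  rintro w ⟨hwc, hwS⟩
  apply of_mem_closure hC hwc
  intro hwC
  rcases hCB hwC with h | h
  · exact Set.disjoint_left.1 hd hwS h
  · obtain ⟨v, h1, h2⟩ := mem_closure_iff_nhds.1 hwc B (hB.mem_nhds h)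
    exact hw v h1 h2

lemma hasLogRatio (hC : IsClosed C) (h : Unseparated C p q) : HasLogRatio C p q := by
  obtain ⟨S, hS, hd, hp, hq⟩ := h
  refine hS.induction₂ (HasLogRatio C) ?_ ?_ ?_ hp hq
  · intro x hx
    obtain ⟨ε, hε, hb⟩ := Metric.isOpen_iff.1 hC.isOpen_compl x (Set.disjoint_left.1 hd hx)
    apply mem_nhdsWithin_of_mem_nhds
    filter_upwards [Metric.ball_mem_nhds x (show 0 < ε / 4 by positivity)] with y hy
    have key : ∀ z ∈ C, planeToComplex z - planeToComplex y ≠ 0 ∧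
        (planeToComplex z - planeToComplex x) / (planeToComplex z - planeToComplex y) ∈
          Complex.slitPlane := by
      intro z hz
      have h1 : ε ≤ dist z x := by
        by_contra! hlt
        exact hb hlt hz
      have h2 := dist_le_norm_planeToComplex_sub z y
      have h3 := norm_planeToComplex_sub_le y x
      have h4 := dist_triangle z y x
      have h5 : dist y x < ε / 4 := hy
      have h6 : 0 < ‖planeToComplex z - planeToComplex y‖ := by linarith
      have h7 := norm_pos_iff.1 h6
      refine ⟨h7, ?_⟩
      have h8 : (planeToComplex z - planeToComplex x) / (planeToComplex z - planeToComplex y)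
          = 1 + (planeToComplex y - planeToComplex x) / (planeToComplex z - planeToComplex y) := by
        field_simp; ring
      rw [h8]
      apply Complex.mem_slitPlane_of_norm_lt_one
      rw [norm_div, div_lt_one h6]
      linarith
    refine ⟨fun z => Complex.log
      ((planeToComplex z - planeToComplex x) / (planeToComplex z - planeToComplex y)), ?_, ?_⟩
    · refine ContinuousOn.clog (ContinuousOn.div ?_ ?_ fun z hz => (key z hz).1)
        fun z hz => (key z hz).2
      · exact (continuous_planeToComplex.sub continuous_const).continuousOn
      · exact (continuous_planeToComplex.sub continuous_const).continuousOn
    · intro z hz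
      rw [Complex.exp_log (Complex.slitPlane_ne_zero (key z hz).2)]
      exact div_mul_cancel₀ _ (key z hz).1
  · rintro x y z - - - ⟨g, hg, hg'⟩ ⟨k, hk, hk'⟩
    refine ⟨fun z => g z + k z, hg.add hk, fun w hw => ?_⟩
    rw [Complex.exp_add, mul_assoc, hk' w hw, hg' w hw]
  · rintro x y - - ⟨g, hg, hg'⟩
    refine ⟨fun z => - g z, hg.neg, fun w hw => ?_⟩
    rw [← hg' w hw, ← mul_assoc, ← Complex.exp_add]
    simp

end Unseparated

lemma exists_log_of_continuous {H : ℝ × ℝ → ℂ} (hH : Continuous H) (h0 : ∀ z, H z ≠ 0) :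
    ∃ g : ℝ × ℝ → ℂ, Continuous g ∧ ∀ z, Complex.exp (g z) = H z := by
  obtain ⟨F, ⟨-, hF⟩, -⟩ := Complex.isCoveringMap_exp.existsUnique_continuousMap_lifts
    (A := ℝ × ℝ) ⟨fun z => ⟨H z, h0 z⟩, by fun_prop⟩ 0 (Complex.log (H 0))
    (by simp [Complex.exp_log (h0 0)])
  refine ⟨F, F.continuous, fun z => ?_⟩
  simpa using congrArg Subtype.val (congrFun hF z)

/-- Two continuous logarithms of the same function differ by a constant on a connected set. -/
lemma IsPreconnected.sub_eq_of_exp_eq {X : Type*} [TopologicalSpace X] {s : Set X}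
    (hs : IsPreconnected s) {g k : X → ℂ} (hg : ContinuousOn g s) (hk : ContinuousOn k s)
    (c : ℂ) (h : ∀ z ∈ s, Complex.exp (g z) = c * Complex.exp (k z)) {x y : X} (hx : x ∈ s) (hy : y ∈ s) :
    g x - k x = g y - k y := by
  have hc : c ≠ 0 := by
    rintro rfl
    have := h x hx
    simp at this
  have hint : ∀ z ∈ s, ∃ n : ℤ, (n : ℂ) = (g z - k z - Complex.log c) / (2 * Real.pi * Complex.I) := by
    intro z hz
    have h1 : Complex.exp (g z) = Complex.exp (Complex.log c + k z) := by
      rw [Complex.exp_add, Complex.exp_log hc, h z hz]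
    obtain ⟨n, hn⟩ := Complex.exp_eq_exp_iff_exists_int.1 h1
    refine ⟨n, ?_⟩
    rw [hn]
    have := Complex.two_pi_I_ne_zero
    field_simp
    ring
  have hcont : ContinuousOn (fun z => ((g z - k z - Complex.log c) /
      (2 * Real.pi * Complex.I)).re) s :=
    Complex.continuous_re.comp_continuousOn (((hg.sub hk).sub continuousOn_const).div_const _)
  have hd : IsDiscrete (range ((↑) : ℤ → ℝ)) :=
    ⟨Int.isClosedEmbedding_coe_real.isEmbedding.toHomeomorph.symm.isEmbedding.discreteTopology⟩
  have hconst := hs.constant_of_mapsTo hd hcont (T := range ((↑) : ℤ → ℝ)) (fun z hz => by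
    obtain ⟨n, hn⟩ := hint z hz
    exact ⟨n, by simp [← hn]⟩) hx hy
  obtain ⟨n, hn⟩ := hint x hx
  obtain ⟨m, hm⟩ := hint y hy
  simp only [← hn, ← hm, Complex.intCast_re, Int.cast_inj] at hconst
  have := Complex.two_pi_I_ne_zero
  rw [hconst, hm, div_left_inj' this] at hn
  linear_combination -hn

/-- No continuous function on the plane is a logarithm of `z - p` outside a disk. -/
lemma not_exists_log_sub {h : ℝ × ℝ → ℂ} (hc : Continuous h) {p : ℝ × ℝ} {R : ℝ}
    (hh : ∀ z, R ≤ ‖planeToComplex z - planeToComplex p‖ →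
      Complex.exp (h z) = planeToComplex z - planeToComplex p) : False := by
  set r : ℝ := max R 1 with hr
  have hr0 : 0 < r := lt_of_lt_of_le one_pos (le_max_right _ _)
  let γ : ℝ → ℝ × ℝ := fun t => (p.1 + r * Real.cos t, p.2 + r * Real.sin t)
  have hγ : ∀ t, planeToComplex (γ t) - planeToComplex p = r * Complex.exp (t * Complex.I) := by
    intro t
    apply Complex.ext <;> simp [planeToComplex, γ, Complex.exp_re, Complex.exp_im]
  have key : h (γ 0) - (0 : ℝ) * Complex.I = h (γ (2 * Real.pi)) - (2 * Real.pi : ℝ) * Complex.I := by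
    refine isPreconnected_univ.sub_eq_of_exp_eq (g := fun t : ℝ => h (γ t))
      (k := fun t : ℝ => t * Complex.I) (c := r) ?_ ?_ ?_ (mem_univ _) (mem_univ _)
    · exact (hc.comp (by fun_prop)).continuousOn
    · fun_prop
    · intro t _
      rw [hh, hγ]
      rw [hγ, norm_mul, Complex.norm_exp_ofReal_mul_I, mul_one,
        Complex.norm_real, Real.norm_of_nonneg hr0.le]
      exact le_max_left R 1
  have h2 : γ 0 = γ (2 * Real.pi) := by simp [γ]
  rw [h2] at key
  have := Complex.two_pi_I_ne_zero
  apply this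
  push_cast at key
  linear_combination key

/-- Eilenberg's criterion, for a point whose complementary component is bounded. -/
lemma HasLogRatio.unseparated {C : Set (ℝ × ℝ)} (hC : IsClosed C) {p q : ℝ × ℝ} (hp : p ∉ C)
    (hb : Bornology.IsBounded {w | Unseparated C p w}) (h : HasLogRatio C p q) :
    Unseparated C p q := by
  by_contra hcon
  obtain ⟨g, hg, hgC⟩ := h
  obtain ⟨G, hG⟩ := ContinuousMap.exists_restrict_eq hC ⟨C.domRestrict g, hg.domRestrict⟩
  have hGC : ∀ z ∈ C, G z = g z := fun z hz => congrArg (fun f => f ⟨z, hz⟩) hG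
  set P : Set (ℝ × ℝ) := {w | Unseparated C p w} with hP
  have hself : p ∈ P := (Unseparated.eventually_of_notMem hC hp).self_of_nhds
  classical
  let H : ℝ × ℝ → ℂ := P.piecewise
    (fun z => Complex.exp (G z) * (planeToComplex z - planeToComplex q))
    (fun z => planeToComplex z - planeToComplex p)
  have hH : Continuous H := by
    refine Continuous.piecewise ?_ ?_ ?_
    · intro z hz
      have hzC : z ∈ C := by
        by_contra hzC
        have h1 := Unseparated.of_mem_closure hC (frontier_subset_closure hz) hzC
        rw [(Unseparated.isOpen_setOf hC).frontier_eq] at hz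
        exact hz.2 h1
      rw [hGC z hzC, hgC z hzC]
    · exact (Complex.continuous_exp.comp G.continuous).mul
        (continuous_planeToComplex.sub continuous_const)
    · exact continuous_planeToComplex.sub continuous_const
  obtain ⟨k, hk, hkH⟩ := exists_log_of_continuous hH fun z => by
    by_cases hz : z ∈ P
    · simp only [H, piecewise_eq_of_mem _ _ _ hz]
      refine mul_ne_zero (Complex.exp_ne_zero _) (sub_ne_zero.2 fun h => ?_)
      rw [planeToComplex_injective h] at hz
      exact hcon hz
    · simp only [H, piecewise_eq_of_notMem _ _ _ hz]
      refine sub_ne_zero.2 fun h => hz ?_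
      rwa [planeToComplex_injective h]
  obtain ⟨R, hR⟩ := hb.subset_ball p
  refine not_exists_log_sub hk (p := p) (R := 2 * R) fun z hz => ?_
  rw [hkH]
  refine piecewise_eq_of_notMem _ _ _ fun hzP => ?_
  have h1 := norm_planeToComplex_sub_le z p
  have h2 : dist z p < R := hR hzP
  linarith

/-- Janiszewski's theorem: two closed sets with connected intersection, neither of which
separates `p` from `q`, do not separate `p` from `q` together (in the bounded case). -/
theorem Unseparated.union {A B : Set (ℝ × ℝ)} (hA : IsClosed A) (hB : IsClosed B)
    (hAB : IsPreconnected (A ∩ B)) {p q : ℝ × ℝ}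
    (hb : Bornology.IsBounded {w | Unseparated (A ∪ B) p w})
    (h₁ : Unseparated A p q) (h₂ : Unseparated B p q) : Unseparated (A ∪ B) p q := by
  refine HasLogRatio.unseparated (hA.union hB) (by
    rintro (h | h)
    exacts [h₁.left_notMem h, h₂.left_notMem h]) hb ?_
  obtain ⟨g, hg, hg'⟩ := h₁.hasLogRatio hA
  obtain ⟨k, hk, hk'⟩ := h₂.hasLogRatio hB
  have hq : ∀ z ∈ A ∪ B, planeToComplex z - planeToComplex q ≠ 0 := by
    rintro z hz h
    have := planeToComplex_injective (sub_eq_zero.1 h)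
    subst this
    rcases hz with hz | hz
    exacts [h₁.symm.left_notMem hz, h₂.symm.left_notMem hz]
  obtain ⟨d, hd1, hd2⟩ : ∃ d : ℂ, Complex.exp d = 1 ∧ ∀ z ∈ A ∩ B, g z = k z + d := by
    rcases (A ∩ B).eq_empty_or_nonempty with h | ⟨w, hw⟩
    · exact ⟨0, by simp, by simp [h]⟩
    · have hexp : ∀ z ∈ A ∩ B, Complex.exp (g z) = 1 * Complex.exp (k z) := fun z hz => by
        rw [one_mul]
        exact mul_right_cancel₀ (hq z (Or.inl hz.1)) ((hg' z hz.1).trans (hk' z hz.2).symm)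
      refine ⟨g w - k w, ?_, fun z hz => ?_⟩
      · rw [Complex.exp_sub, hexp w hw, one_mul, div_self (Complex.exp_ne_zero _)]
      · rw [← hAB.sub_eq_of_exp_eq (hg.mono inter_subset_left) (hk.mono inter_subset_right) 1
          hexp hz hw]
        ring
  classical
  have eA : EqOn (A.piecewise g fun z => k z + d) g A := fun z hz => piecewise_eq_of_mem _ _ _ hz
  have eB : EqOn (A.piecewise g fun z => k z + d) (fun z => k z + d) B := fun z hz => by
    by_cases hzA : z ∈ A
    · rw [eA hzA, hd2 z ⟨hzA, hz⟩]
    · exact piecewise_eq_of_notMem _ _ _ hzA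
  refine ⟨A.piecewise g fun z => k z + d, ?_, ?_⟩
  · exact (hg.congr eA).union_of_isClosed ((hk.add continuousOn_const).congr eB) hA hB
  · rintro z (hz | hz)
    · rw [eA hz, hg' z hz]
    · rw [eB hz, Complex.exp_add, hd1, mul_one, hk' z hz]

/-- The boundary of the square `[-1, 2]²`, which surrounds `unitSq`. -/
def outerFrame : Set (ℝ × ℝ) := sphere ((1 / 2, 1 / 2) : ℝ × ℝ) (3 / 2)

/-- The open square `(-1, 2)²`. -/
def outerSq : Set (ℝ × ℝ) := ball ((1 / 2, 1 / 2) : ℝ × ℝ) (3 / 2)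

lemma mem_outerSq {z : ℝ × ℝ} : z ∈ outerSq ↔ (-1 < z.1 ∧ z.1 < 2) ∧ -1 < z.2 ∧ z.2 < 2 := by
  simp only [outerSq, mem_ball, Prod.dist_eq, Real.dist_eq, max_lt_iff, abs_lt]
  constructor <;> rintro ⟨⟨_, _⟩, _, _⟩ <;> refine ⟨⟨?_, ?_⟩, ?_, ?_⟩ <;> linarith

lemma notMem_outerFrame {z : ℝ × ℝ} (h : z ∈ outerSq) : z ∉ outerFrame := fun h' =>
  ((mem_ball.1 h).trans_eq (mem_sphere.1 h').symm).false

lemma isClosed_outerFrame : IsClosed outerFrame := isClosed_sphere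

lemma isPreconnected_outerFrame : IsPreconnected outerFrame :=
  isPreconnected_sphere (by
    rw [← Module.finrank_eq_rank, Module.finrank_prod]; norm_num) _ _

lemma Unseparated.mem_outerSq {C : Set (ℝ × ℝ)} (hC : outerFrame ⊆ C) {p q : ℝ × ℝ}
    (hp : p ∈ outerSq) (h : Unseparated C p q) : q ∈ outerSq := by
  obtain ⟨S, hS, hd, hpS, hqS⟩ := h
  refine hS.subset_of_closure_inter_subset isOpen_ball ⟨p, hpS, hp⟩ ?_ hqS
  rintro z ⟨hz, hzS⟩
  have h1 : dist z ((1 / 2, 1 / 2) : ℝ × ℝ) ≤ 3 / 2 := closure_ball_subset_closedBall hz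
  exact mem_ball.2 (lt_of_le_of_ne h1 fun h => Set.disjoint_left.1 hd hzS (hC h))

theorem Unseparated.union_of_outerFrame {A B : Set (ℝ × ℝ)} (hA : IsClosed A) (hB : IsClosed B)
    (hAB : IsPreconnected (A ∩ B)) (hF : outerFrame ⊆ A ∪ B) {p q : ℝ × ℝ} (hp : p ∈ outerSq)
    (h₁ : Unseparated A p q) (h₂ : Unseparated B p q) : Unseparated (A ∪ B) p q :=
  Unseparated.union hA hB hAB (isBounded_ball.subset fun _ hw => hw.mem_outerSq hF hp) h₁ h₂

lemma mem_outerFrame {z : ℝ × ℝ} : z ∈ outerFrame ↔ (z.1 ∈ Icc (-1) 2 ∧ z.2 ∈ Icc (-1) 2) ∧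
    (z.1 = -1 ∨ z.1 = 2 ∨ z.2 = -1 ∨ z.2 = 2) := by
  simp only [outerFrame, mem_sphere, Prod.dist_eq, Real.dist_eq, mem_Icc]
  constructor
  · intro h
    have h1 := h ▸ le_max_left |z.1 - 1 / 2| |z.2 - 1 / 2|
    have h2 := h ▸ le_max_right |z.1 - 1 / 2| |z.2 - 1 / 2|
    rw [abs_le] at h1 h2
    refine ⟨⟨⟨by linarith, by linarith⟩, by linarith, by linarith⟩, ?_⟩
    rcases max_choice |z.1 - 1 / 2| |z.2 - 1 / 2| with h3 | h3 <;> rw [h3] at h <;>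
      rcases (abs_eq (by norm_num)).1 h with h4 | h4
    · exact Or.inr (Or.inl (by linarith))
    · exact Or.inl (by linarith)
    · exact Or.inr (Or.inr (Or.inr (by linarith)))
    · exact Or.inr (Or.inr (Or.inl (by linarith)))
  · rintro ⟨⟨⟨h1, h2⟩, h3, h4⟩, h⟩
    have h5 : |z.1 - 1 / 2| ≤ 3 / 2 := abs_le.2 ⟨by linarith, by linarith⟩
    have h6 : |z.2 - 1 / 2| ≤ 3 / 2 := abs_le.2 ⟨by linarith, by linarith⟩
    rcases h with h | h | h | h
    · exact (max_eq_left (h6.trans_eq (by rw [h]; norm_num))).trans (by rw [h]; norm_num)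
    · exact (max_eq_left (h6.trans_eq (by rw [h]; norm_num))).trans (by rw [h]; norm_num)
    · exact (max_eq_right (h5.trans_eq (by rw [h]; norm_num))).trans (by rw [h]; norm_num)
    · exact (max_eq_right (h5.trans_eq (by rw [h]; norm_num))).trans (by rw [h]; norm_num)

lemma mem_unitSq {z : ℝ × ℝ} : z ∈ unitSq ↔ (0 ≤ z.1 ∧ z.1 ≤ 1) ∧ 0 ≤ z.2 ∧ z.2 ≤ 1 := by
  simp only [unitSq, mem_Icc, Prod.le_def]
  tauto

lemma isClosed_unitSq : IsClosed unitSq := isClosed_Icc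

lemma convex_unitSq : Convex ℝ unitSq := convex_Icc _ _

lemma unitSq_eq_prod : unitSq = Icc (0 : ℝ) 1 ×ˢ Icc (0 : ℝ) 1 := by
  ext z
  rw [mem_unitSq]
  exact Iff.rfl

lemma mem_interior_unitSq {z : ℝ × ℝ} :
    z ∈ interior unitSq ↔ (0 < z.1 ∧ z.1 < 1) ∧ 0 < z.2 ∧ z.2 < 1 := by
  rw [unitSq_eq_prod, interior_prod_eq, interior_Icc]
  exact Iff.rfl

lemma closure_interior_unitSq : closure (interior unitSq) = unitSq := by
  rw [unitSq_eq_prod, interior_prod_eq, closure_prod_eq, interior_Icc,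
    closure_Ioo (by norm_num)]

lemma unitSq_subset_outerSq : unitSq ⊆ outerSq := fun z hz => by
  rw [mem_unitSq] at hz
  rw [mem_outerSq]
  exact ⟨⟨by linarith, by linarith⟩, by linarith, by linarith⟩

/-- A decomposition of the square whose pieces `D₁` and `D₂` contain the bottom and the top side,
with connectedness in place of the stronger hypotheses of `SqDecomp`. -/
structure SqConfig (D₁ D₂ K : Set (ℝ × ℝ)) (a b : ℝ × ℝ) : Prop where
  cover : unitSq = D₁ ∪ D₂ ∪ K
  disj : Disjoint D₁ D₂
  open₁ : ∃ U, IsOpen U ∧ D₁ = U ∩ unitSq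
  open₂ : ∃ U, IsOpen U ∧ D₂ = U ∩ unitSq
  conn₁ : IsPreconnected D₁
  conn₂ : IsPreconnected D₂
  front₁ : K = closure D₁ \ D₁
  front₂ : K = closure D₂ \ D₂
  bdry : K ∩ frontier unitSq = {a, b}
  ha : a ∈ leftEdge
  hb : b ∈ rightEdge
  bot : ∀ u ∈ Icc (0 : ℝ) 1, (u, (0 : ℝ)) ∈ D₁
  top : ∀ u ∈ Icc (0 : ℝ) 1, (u, (1 : ℝ)) ∈ D₂

namespace SqConfig

variable {D₁ D₂ K : Set (ℝ × ℝ)} {a b : ℝ × ℝ} (h : SqConfig D₁ D₂ K a b)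
include h

lemma D₁_subset : D₁ ⊆ unitSq := h.cover ▸ fun _ hz => Or.inl (Or.inl hz)
lemma D₂_subset : D₂ ⊆ unitSq := h.cover ▸ fun _ hz => Or.inl (Or.inr hz)
lemma K_subset : K ⊆ unitSq := h.cover ▸ fun _ hz => Or.inr hz
lemma a_mem : a ∈ K := (h.bdry.superset (mem_insert a {b})).1
lemma b_mem : b ∈ K := (h.bdry.superset (mem_insert_of_mem a rfl)).1
lemma notMem₁ {z : ℝ × ℝ} (hz : z ∈ K) : z ∉ D₁ := (h.front₁ ▸ hz).2
lemma notMem₂ {z : ℝ × ℝ} (hz : z ∈ K) : z ∉ D₂ := (h.front₂ ▸ hz).2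

lemma ne : a ≠ b := fun hab => by
  have h1 := h.ha.1
  have h2 := h.hb.1
  rw [hab] at h1
  linarith

lemma isClosed_K : IsClosed K := by
  obtain ⟨U, hU, hD⟩ := h.open₁
  have h1 : K = closure D₁ \ U := by
    rw [h.front₁]
    ext z
    constructor
    · rintro ⟨h1, h2⟩
      exact ⟨h1, fun hz => h2 (hD ▸ ⟨hz, closure_minimal h.D₁_subset isClosed_unitSq h1⟩)⟩
    · rintro ⟨h1, h2⟩
      exact ⟨h1, fun hz => h2 (hD ▸ hz).1⟩
  rw [h1, sdiff_eq]
  exact isClosed_closure.inter hU.isClosed_compl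

lemma mem_interior {z : ℝ × ℝ} (hz : z ∈ K) (ha : z ≠ a) (hb : z ≠ b) : z ∈ interior unitSq := by
  by_contra hi
  have : z ∈ K ∩ frontier unitSq := ⟨hz, subset_closure (h.K_subset hz), hi⟩
  rw [h.bdry] at this
  rcases this with h | h
  exacts [ha h, hb h]

/-- Two points of `K` are joined through `D₁` and through `D₂`. -/
lemma preconn₁ {s : Set (ℝ × ℝ)} (hs : s ⊆ K) : IsPreconnected (D₁ ∪ s) :=
  h.conn₁.subset_closure subset_union_left
    (union_subset subset_closure fun _ hz => (h.front₁ ▸ hs hz).1)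

lemma preconn₂ {s : Set (ℝ × ℝ)} (hs : s ⊆ K) : IsPreconnected (D₂ ∪ s) :=
  h.conn₂.subset_closure subset_union_left
    (union_subset subset_closure fun _ hz => (h.front₂ ▸ hs hz).1)

end SqConfig

/-- The segment from `(c, -1)` to `(c, 0)`. -/
def botTail (c : ℝ) : Set (ℝ × ℝ) := {c} ×ˢ Icc (-1) 0

/-- The segment from `(c, 1)` to `(c, 2)`. -/
def topTail (c : ℝ) : Set (ℝ × ℝ) := {c} ×ˢ Icc 1 2

lemma mem_botTail {c : ℝ} {z : ℝ × ℝ} : z ∈ botTail c ↔ z.1 = c ∧ -1 ≤ z.2 ∧ z.2 ≤ 0 := Iff.rfl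
lemma mem_topTail {c : ℝ} {z : ℝ × ℝ} : z ∈ topTail c ↔ z.1 = c ∧ 1 ≤ z.2 ∧ z.2 ≤ 2 := Iff.rfl

/-- A pair of continua joining `x` to the bottom and the top side through `D₁` and `D₂`. -/
structure IsCut (D₁ D₂ : Set (ℝ × ℝ)) (x : ℝ × ℝ) (c₁ c₂ : ℝ) (A₁ A₂ : Set (ℝ × ℝ)) : Prop where
  c₁_mem : c₁ ∈ Ioo (0 : ℝ) 1
  c₂_mem : c₂ ∈ Ioo (0 : ℝ) 1
  closed₁ : IsClosed A₁
  closed₂ : IsClosed A₂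
  conn₁ : IsPreconnected A₁
  conn₂ : IsPreconnected A₂
  mem₁ : x ∈ A₁
  mem₂ : x ∈ A₂
  bot_mem : (c₁, (0 : ℝ)) ∈ A₁
  top_mem : (c₂, (1 : ℝ)) ∈ A₂
  subset₁ : A₁ ⊆ D₁ ∪ {x}
  subset₂ : A₂ ⊆ D₂ ∪ {x}

/-- The lower half of the barrier of a cut. -/
def barrierBot (c : ℝ) (A : Set (ℝ × ℝ)) : Set (ℝ × ℝ) := outerFrame ∪ (botTail c ∪ A)

/-- The upper half of the barrier of a cut. -/
def barrierTop (c : ℝ) (A : Set (ℝ × ℝ)) : Set (ℝ × ℝ) := outerFrame ∪ (topTail c ∪ A)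

/-- A closed connected set extending the frame, that inside the square is contained in `D ∪ {x}`
and outside is contained in `Z` and the frame. -/
structure IsHalfBarrier (D Z : Set (ℝ × ℝ)) (x : ℝ × ℝ) (P : Set (ℝ × ℝ)) : Prop where
  closed : IsClosed P
  conn : IsPreconnected P
  frame : outerFrame ⊆ P
  mem : x ∈ P
  inside : P ∩ unitSq ⊆ D ∪ {x}
  outside : P ⊆ unitSq ∪ Z ∪ outerFrame

/-- The two half-planes below and above the unit square. -/
def belowSq : Set (ℝ × ℝ) := {z | z.2 < 0}
def aboveSq : Set (ℝ × ℝ) := {z | 1 < z.2}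

lemma convex_belowSq : Convex ℝ belowSq :=
  (convex_Iio (0 : ℝ)).linear_preimage (LinearMap.snd ℝ ℝ ℝ)

lemma convex_aboveSq : Convex ℝ aboveSq :=
  (convex_Ioi (1 : ℝ)).linear_preimage (LinearMap.snd ℝ ℝ ℝ)

lemma disjoint_unitSq_outerFrame : Disjoint unitSq outerFrame :=
  Set.disjoint_left.2 fun _ hz => notMem_outerFrame (unitSq_subset_outerSq hz)

namespace IsCut

variable {D₁ D₂ K : Set (ℝ × ℝ)} {a b x : ℝ × ℝ} {c₁ c₂ : ℝ} {A₁ A₂ : Set (ℝ × ℝ)}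

lemma half₁ (h : SqConfig D₁ D₂ K a b) (hx : x ∈ K) (hc : IsCut D₁ D₂ x c₁ c₂ A₁ A₂) :
    IsHalfBarrier D₁ belowSq x (barrierBot c₁ A₁) := by
  have hA : A₁ ⊆ unitSq := fun z hz => (hc.subset₁ hz).elim (fun h' => h.D₁_subset h')
    fun h' => (mem_singleton_iff.1 h') ▸ h.K_subset hx
  have := hc.c₁_mem
  refine ⟨isClosed_outerFrame.union ((isClosed_singleton.prod isClosed_Icc).union hc.closed₁),
    ?_, subset_union_left, Or.inr (Or.inr hc.mem₁), ?_, ?_⟩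
  · refine isPreconnected_outerFrame.union (c₁, -1) ?_ (Or.inl (by simp [mem_botTail]))
      (IsPreconnected.union (c₁, 0) (by simp [mem_botTail]) hc.bot_mem
        (isPreconnected_singleton.prod isPreconnected_Icc) hc.conn₁)
    rw [mem_outerFrame]
    refine ⟨⟨⟨?_, ?_⟩, ?_, ?_⟩, Or.inr (Or.inr (Or.inl rfl))⟩ <;> norm_num <;>
      linarith [this.1, this.2]
  · rintro z ⟨hz | hz | hz, hu⟩
    · exact absurd hz (Set.disjoint_left.1 disjoint_unitSq_outerFrame hu)
    · rw [mem_botTail] at hz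
      rw [mem_unitSq] at hu
      rw [show z = (c₁, 0) from Prod.ext hz.1 (by simp only; linarith)]
      exact hc.subset₁ hc.bot_mem
    · exact hc.subset₁ hz
  · rintro z (hz | hz | hz)
    · exact Or.inr hz
    · rcases hz.2.2.lt_or_eq with h0 | h0
      · exact Or.inl (Or.inr h0)
      · rw [show z = (c₁, 0) from Prod.ext hz.1 h0]
        exact Or.inl (Or.inl (hA hc.bot_mem))
    · exact Or.inl (Or.inl (hA hz))

lemma half₂ (h : SqConfig D₁ D₂ K a b) (hx : x ∈ K) (hc : IsCut D₁ D₂ x c₁ c₂ A₁ A₂) :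
    IsHalfBarrier D₂ aboveSq x (barrierTop c₂ A₂) := by
  have hA : A₂ ⊆ unitSq := fun z hz => (hc.subset₂ hz).elim (fun h' => h.D₂_subset h')
    fun h' => (mem_singleton_iff.1 h') ▸ h.K_subset hx
  have := hc.c₂_mem
  refine ⟨isClosed_outerFrame.union ((isClosed_singleton.prod isClosed_Icc).union hc.closed₂),
    ?_, subset_union_left, Or.inr (Or.inr hc.mem₂), ?_, ?_⟩
  · refine isPreconnected_outerFrame.union (c₂, 2) ?_ (Or.inl (by simp [mem_topTail]))
      (IsPreconnected.union (c₂, 1) (by simp [mem_topTail]) hc.top_mem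
        (isPreconnected_singleton.prod isPreconnected_Icc) hc.conn₂)
    rw [mem_outerFrame]
    refine ⟨⟨⟨?_, ?_⟩, ?_, ?_⟩, Or.inr (Or.inr (Or.inr rfl))⟩ <;> norm_num <;>
      linarith [this.1, this.2]
  · rintro z ⟨hz | hz | hz, hu⟩
    · exact absurd hz (Set.disjoint_left.1 disjoint_unitSq_outerFrame hu)
    · rw [mem_topTail] at hz
      rw [mem_unitSq] at hu
      rw [show z = (c₂, 1) from Prod.ext hz.1 (by simp only; linarith)]
      exact hc.subset₂ hc.top_mem
    · exact hc.subset₂ hz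
  · rintro z (hz | hz | hz)
    · exact Or.inr hz
    · rcases hz.2.1.lt_or_eq with h0 | h0
      · exact Or.inl (Or.inr h0)
      · rw [show z = (c₂, 1) from Prod.ext hz.1 h0.symm]
        exact Or.inl (Or.inl (hA hc.top_mem))
    · exact Or.inl (Or.inl (hA hz))

end IsCut

namespace IsHalfBarrier

variable {D₁ D₂ K : Set (ℝ × ℝ)} {a b x y z : ℝ × ℝ} {P P' P₁ P₂ : Set (ℝ × ℝ)}

lemma disjoint {D Z S : Set (ℝ × ℝ)} (hP : IsHalfBarrier D Z x P) (hS : S ⊆ unitSq)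
    (hSD : Disjoint S D) (hx : x ∉ S) : Disjoint S P :=
  Set.disjoint_left.2 fun _ hz hzP => (hP.inside ⟨hzP, hS hz⟩).elim
    (Set.disjoint_left.1 hSD hz) fun h => hx (mem_singleton_iff.1 h ▸ hz)

lemma unseparated₁ (h : SqConfig D₁ D₂ K a b) (hP : IsHalfBarrier D₁ belowSq x P)
    (hy : y ∈ K) (hz : z ∈ K) (hyx : y ≠ x) (hzx : z ≠ x) (hx : x ∈ K) : Unseparated P y z := by
  have hyz : ({y, z} : Set (ℝ × ℝ)) ⊆ K := by rintro w (rfl | rfl) <;> assumption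
  refine ⟨D₂ ∪ {y, z}, h.preconn₂ hyz, hP.disjoint
    (union_subset h.D₂_subset (hyz.trans h.K_subset)) ?_ ?_, by simp, by simp⟩
  · exact h.disj.symm.union_left (Set.disjoint_left.2 fun w hw => h.notMem₁ (hyz hw))
  · rintro (h' | rfl | rfl)
    exacts [h.notMem₂ hx h', hyx rfl, hzx rfl]

lemma unseparated₂ (h : SqConfig D₁ D₂ K a b) (hP : IsHalfBarrier D₂ aboveSq x P)
    (hy : y ∈ K) (hz : z ∈ K) (hyx : y ≠ x) (hzx : z ≠ x) (hx : x ∈ K) : Unseparated P y z := by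
  have hyz : ({y, z} : Set (ℝ × ℝ)) ⊆ K := by rintro w (rfl | rfl) <;> assumption
  refine ⟨D₁ ∪ {y, z}, h.preconn₁ hyz, hP.disjoint
    (union_subset h.D₁_subset (hyz.trans h.K_subset)) ?_ ?_, by simp, by simp⟩
  · exact h.disj.union_left (Set.disjoint_left.2 fun w hw => h.notMem₂ (hyz hw))
  · rintro (h' | rfl | rfl)
    exacts [h.notMem₁ hx h', hyx rfl, hzx rfl]

lemma inter_subset (h : SqConfig D₁ D₂ K a b) (h₁ : IsHalfBarrier D₁ belowSq x P₁)
    (h₂ : IsHalfBarrier D₂ aboveSq x P₂) : P₁ ∩ P₂ ⊆ outerFrame ∪ {x} := by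
  rintro z ⟨hz1, hz2⟩
  by_cases hu : z ∈ unitSq
  · rcases h₁.inside ⟨hz1, hu⟩ with h3 | h3
    · rcases h₂.inside ⟨hz2, hu⟩ with h4 | h4
      · exact absurd h4 (Set.disjoint_left.1 h.disj h3)
      · exact Or.inr h4
    · exact Or.inr h3
  · rcases h₁.outside hz1 with (h3 | h3) | h3
    · exact absurd h3 hu
    · rcases h₂.outside hz2 with (h4 | h4) | h4
      · exact absurd h4 hu
      · exact absurd ((show 1 < z.2 from h4).trans h3) (by norm_num)
      · exact Or.inl h4
    · exact Or.inl h3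

/-- Replacing one half of a barrier at `x` does not affect which points of `K` it separates. -/
lemma replace (hP : IsClosed P) (hP' : IsClosed P') (hPc : IsPreconnected P) {M : Set (ℝ × ℝ)}
    (hM : IsClosed M) (hPF : outerFrame ⊆ P) (hPM : P' ∩ M ⊆ P) (hy : y ∈ outerSq)
    (hu : Unseparated (P ∪ P') y z) (hyz : Unseparated (P ∪ M) y z) :
    Unseparated (P' ∪ M) y z := by
  refine Unseparated.mono (C := (P ∪ P') ∪ (P ∪ M)) ?_ (union_subset_union
    subset_union_right subset_union_right)
  refine Unseparated.union_of_outerFrame (hP.union hP') (hP.union hM) ?_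
    (fun w hw => Or.inl (Or.inl (hPF hw))) hy hu hyz
  rwa [← union_inter_distrib_left, union_eq_left.2 hPM]

lemma union {D Z : Set (ℝ × ℝ)} (hP : IsHalfBarrier D Z x P) (hP' : IsHalfBarrier D Z x P') :
    IsHalfBarrier D Z x (P ∪ P') :=
  ⟨hP.closed.union hP'.closed, hP.conn.union x hP.mem hP'.mem hP'.conn,
    hP.frame.trans subset_union_left, Or.inl hP.mem,
    union_inter_distrib_right P P' _ ▸ union_subset hP.inside hP'.inside,
    union_subset hP.outside hP'.outside⟩

lemma unseparated_iff (h : SqConfig D₁ D₂ K a b) (hx : x ∈ K) (hy : y ∈ K) (hz : z ∈ K)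
    (hyx : y ≠ x) (hzx : z ≠ x) {P₁' P₂' : Set (ℝ × ℝ)}
    (h₁ : IsHalfBarrier D₁ belowSq x P₁) (h₂ : IsHalfBarrier D₂ aboveSq x P₂)
    (h₁' : IsHalfBarrier D₁ belowSq x P₁') (h₂' : IsHalfBarrier D₂ aboveSq x P₂')
    (hu : Unseparated (P₁ ∪ P₂) y z) : Unseparated (P₁' ∪ P₂') y z := by
  have hyQ := unitSq_subset_outerSq (h.K_subset hy)
  have e1 : Unseparated (P₁' ∪ P₂) y z := by
    refine replace h₁.closed h₁'.closed h₁.conn h₂.closed h₁.frame ?_ hyQ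
      ((h₁.union h₁').unseparated₁ h hy hz hyx hzx hx) hu
    exact (inter_subset h h₁' h₂).trans (union_subset h₁.frame (singleton_subset_iff.2 h₁.mem))
  rw [union_comm] at e1 ⊢
  refine replace h₂.closed h₂'.closed h₂.conn h₁'.closed h₂.frame ?_ hyQ
      ((h₂.union h₂').unseparated₂ h hy hz hyx hzx hx) e1
  rw [inter_comm]
  exact (inter_subset h h₁' h₂').trans (union_subset h₂.frame (singleton_subset_iff.2 h₂.mem))

end IsHalfBarrier

/-- The barrier of a cut. -/
def cutBarrier (c₁ c₂ : ℝ) (A₁ A₂ : Set (ℝ × ℝ)) : Set (ℝ × ℝ) :=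
  barrierBot c₁ A₁ ∪ barrierTop c₂ A₂

lemma mem_cutBarrier {c₁ c₂ : ℝ} {A₁ A₂ : Set (ℝ × ℝ)} {z : ℝ × ℝ} : z ∈ cutBarrier c₁ c₂ A₁ A₂ ↔
    z ∈ outerFrame ∨ z ∈ botTail c₁ ∨ z ∈ topTail c₂ ∨ z ∈ A₁ ∨ z ∈ A₂ := by
  simp only [cutBarrier, barrierBot, barrierTop, mem_union]
  tauto

/-- The parts of the outer square to the left and to the right of the unit square. -/
def leftBox : Set (ℝ × ℝ) := Ioo (-1) 0 ×ˢ Ioo (-1) 2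
def rightBox : Set (ℝ × ℝ) := Ioo 1 2 ×ˢ Ioo (-1) 2

lemma outerFrame_subset_cutBarrier {c₁ c₂ : ℝ} {A₁ A₂ : Set (ℝ × ℝ)} :
    outerFrame ⊆ cutBarrier c₁ c₂ A₁ A₂ := fun _ hz => Or.inl (Or.inl hz)

namespace IsCut

variable {D₁ D₂ K : Set (ℝ × ℝ)} {a b x y z : ℝ × ℝ} {c₁ c₂ : ℝ} {A₁ A₂ : Set (ℝ × ℝ)}

lemma A₁_subset (h : SqConfig D₁ D₂ K a b) (hx : x ∈ K) (hc : IsCut D₁ D₂ x c₁ c₂ A₁ A₂) :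
    A₁ ⊆ unitSq := fun _ hz => (hc.subset₁ hz).elim (fun h' => h.D₁_subset h')
    fun h' => (mem_singleton_iff.1 h') ▸ h.K_subset hx

lemma A₂_subset (h : SqConfig D₁ D₂ K a b) (hx : x ∈ K) (hc : IsCut D₁ D₂ x c₁ c₂ A₁ A₂) :
    A₂ ⊆ unitSq := fun _ hz => (hc.subset₂ hz).elim (fun h' => h.D₂_subset h')
    fun h' => (mem_singleton_iff.1 h') ▸ h.K_subset hx

lemma isClosed_cutBarrier (h : SqConfig D₁ D₂ K a b) (hx : x ∈ K)
    (hc : IsCut D₁ D₂ x c₁ c₂ A₁ A₂) : IsClosed (cutBarrier c₁ c₂ A₁ A₂) :=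
  (hc.half₁ h hx).closed.union (hc.half₂ h hx).closed

lemma mem_cutBarrier_self (hc : IsCut D₁ D₂ x c₁ c₂ A₁ A₂) : x ∈ cutBarrier c₁ c₂ A₁ A₂ :=
  Or.inl (Or.inr (Or.inr hc.mem₁))

lemma eq_of_mem_cutBarrier (h : SqConfig D₁ D₂ K a b) (hx : x ∈ K)
    (hc : IsCut D₁ D₂ x c₁ c₂ A₁ A₂) (hz : z ∈ K) (hzE : z ∈ cutBarrier c₁ c₂ A₁ A₂) : z = x := by
  rcases hzE with hzE | hzE
  · exact ((hc.half₁ h hx).inside ⟨hzE, h.K_subset hz⟩).resolve_left (h.notMem₁ hz)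
  · exact ((hc.half₂ h hx).inside ⟨hzE, h.K_subset hz⟩).resolve_left (h.notMem₂ hz)

lemma unseparated_left (h : SqConfig D₁ D₂ K a b) (hx : x ∈ K) (hxa : x ≠ a)
    (hc : IsCut D₁ D₂ x c₁ c₂ A₁ A₂) (hz : z ∈ leftBox) :
    Unseparated (cutBarrier c₁ c₂ A₁ A₂) z a := by
  have h1 := hc.c₁_mem
  have h2 := hc.c₂_mem
  have ha := h.ha
  have haE : a ∉ cutBarrier c₁ c₂ A₁ A₂ := fun h' => hxa (hc.eq_of_mem_cutBarrier h hx h.a_mem h').symm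
  refine Unseparated.trans (q := (-1 / 2, a.2)) (Unseparated.of_convex
    ((convex_Ioo (-1 : ℝ) 0).prod (convex_Ioo (-1 : ℝ) 2)) ?_ hz ?_) (Unseparated.of_convex
    ((convex_Ioc (-1 : ℝ) 0).prod (convex_singleton a.2)) ?_ ?_ ?_)
  · refine Set.disjoint_left.2 fun w hw hwE => ?_
    obtain ⟨⟨hw1, hw2⟩, hw3, hw4⟩ := hw
    rcases mem_cutBarrier.1 hwE with h' | h' | h' | h' | h'
    · exact notMem_outerFrame (mem_outerSq.2 ⟨⟨hw1, by linarith⟩, hw3, hw4⟩) h'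
    · rw [mem_botTail] at h'
      linarith [h1.1, h'.1]
    · rw [mem_topTail] at h'
      linarith [h2.1, h'.1]
    · linarith [(mem_unitSq.1 (hc.A₁_subset h hx h')).1.1]
    · linarith [(mem_unitSq.1 (hc.A₂_subset h hx h')).1.1]
  · exact ⟨⟨by norm_num, by norm_num⟩, by linarith [ha.2.1], by linarith [ha.2.2]⟩
  · refine Set.disjoint_left.2 fun w hw hwE => ?_
    obtain ⟨⟨hw1, hw2⟩, hw3⟩ := hw
    rw [mem_singleton_iff] at hw3
    have hwa : 0 ≤ w.1 → w = a := fun h0 => Prod.ext ((le_antisymm hw2 h0).trans ha.1.symm) hw3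
    rcases mem_cutBarrier.1 hwE with h' | h' | h' | h' | h'
    · exact notMem_outerFrame (mem_outerSq.2 ⟨⟨hw1, by linarith⟩, by linarith [ha.2.1],
        by linarith [ha.2.2]⟩) h'
    · rw [mem_botTail] at h'
      linarith [h1.1, h'.1]
    · rw [mem_topTail] at h'
      linarith [h2.1, h'.1]
    · exact haE (hwa (mem_unitSq.1 (hc.A₁_subset h hx h')).1.1 ▸ hwE)
    · exact haE (hwa (mem_unitSq.1 (hc.A₂_subset h hx h')).1.1 ▸ hwE)
  · exact ⟨⟨by norm_num, by norm_num⟩, rfl⟩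
  · exact ⟨⟨by linarith [ha.1], ha.1.le⟩, rfl⟩

lemma unseparated_right (h : SqConfig D₁ D₂ K a b) (hx : x ∈ K) (hxb : x ≠ b)
    (hc : IsCut D₁ D₂ x c₁ c₂ A₁ A₂) (hz : z ∈ rightBox) :
    Unseparated (cutBarrier c₁ c₂ A₁ A₂) z b := by
  have h1 := hc.c₁_mem
  have h2 := hc.c₂_mem
  have hb := h.hb
  have hbE : b ∉ cutBarrier c₁ c₂ A₁ A₂ := fun h' => hxb (hc.eq_of_mem_cutBarrier h hx h.b_mem h').symm
  refine Unseparated.trans (q := (3 / 2, b.2)) (Unseparated.of_convex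
    ((convex_Ioo (1 : ℝ) 2).prod (convex_Ioo (-1 : ℝ) 2)) ?_ hz ?_) (Unseparated.of_convex
    ((convex_Ico (1 : ℝ) 2).prod (convex_singleton b.2)) ?_ ?_ ?_)
  · refine Set.disjoint_left.2 fun w hw hwE => ?_
    obtain ⟨⟨hw1, hw2⟩, hw3, hw4⟩ := hw
    rcases mem_cutBarrier.1 hwE with h' | h' | h' | h' | h'
    · exact notMem_outerFrame (mem_outerSq.2 ⟨⟨by linarith, hw2⟩, hw3, hw4⟩) h'
    · rw [mem_botTail] at h'
      linarith [h1.2, h'.1]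
    · rw [mem_topTail] at h'
      linarith [h2.2, h'.1]
    · linarith [(mem_unitSq.1 (hc.A₁_subset h hx h')).1.2]
    · linarith [(mem_unitSq.1 (hc.A₂_subset h hx h')).1.2]
  · exact ⟨⟨by norm_num, by norm_num⟩, by linarith [hb.2.1], by linarith [hb.2.2]⟩
  · refine Set.disjoint_left.2 fun w hw hwE => ?_
    obtain ⟨⟨hw1, hw2⟩, hw3⟩ := hw
    rw [mem_singleton_iff] at hw3
    have hwb : w.1 ≤ 1 → w = b := fun h0 => Prod.ext ((le_antisymm h0 hw1).trans hb.1.symm) hw3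
    rcases mem_cutBarrier.1 hwE with h' | h' | h' | h' | h'
    · exact notMem_outerFrame (mem_outerSq.2 ⟨⟨by linarith, hw2⟩, by linarith [hb.2.1],
        by linarith [hb.2.2]⟩) h'
    · rw [mem_botTail] at h'
      linarith [h1.2, h'.1]
    · rw [mem_topTail] at h'
      linarith [h2.2, h'.1]
    · exact hbE (hwb (mem_unitSq.1 (hc.A₁_subset h hx h')).1.2 ▸ hwE)
    · exact hbE (hwb (mem_unitSq.1 (hc.A₂_subset h hx h')).1.2 ▸ hwE)
  · exact ⟨⟨by norm_num, by norm_num⟩, rfl⟩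
  · exact ⟨⟨hb.1.ge, by linarith [hb.1]⟩, rfl⟩

/-- A point below the square is not separated from `a` or from `b`. -/
lemma unseparated_below (h : SqConfig D₁ D₂ K a b) (hx : x ∈ K) (hxa : x ≠ a) (hxb : x ≠ b)
    (hc : IsCut D₁ D₂ x c₁ c₂ A₁ A₂) (hz : z ∈ Ioo (-1 : ℝ) 2 ×ˢ Ioo (-1 : ℝ) 0)
    (hzE : z ∉ cutBarrier c₁ c₂ A₁ A₂) :
    Unseparated (cutBarrier c₁ c₂ A₁ A₂) z a ∨ Unseparated (cutBarrier c₁ c₂ A₁ A₂) z b := by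
  have h1 := hc.c₁_mem
  obtain ⟨⟨hz1, hz2⟩, hz3, hz4⟩ := hz
  have hbox : ∀ s : Set ℝ, s ⊆ Ioo (-1) 2 → c₁ ∉ s →
      Disjoint (s ×ˢ Ioo (-1) 0) (cutBarrier c₁ c₂ A₁ A₂) := by
    refine fun s hs hcs => Set.disjoint_left.2 fun w hw hwE => ?_
    obtain ⟨hw1, hw3, hw4⟩ := hw
    have hw2 := hs hw1
    rcases mem_cutBarrier.1 hwE with h' | h' | h' | h' | h'
    · exact notMem_outerFrame (mem_outerSq.2 ⟨⟨hw2.1, hw2.2⟩, hw3, by linarith⟩) h'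
    · rw [mem_botTail] at h'
      exact hcs (h'.1 ▸ hw1)
    · rw [mem_topTail] at h'
      linarith
    · linarith [(mem_unitSq.1 (hc.A₁_subset h hx h')).2.1]
    · linarith [(mem_unitSq.1 (hc.A₂_subset h hx h')).2.1]
  rcases lt_trichotomy z.1 c₁ with hlt | heq | hgt
  · refine Or.inl (Unseparated.trans (q := (-1 / 2, z.2)) (Unseparated.of_convex
      ((convex_Ioo (-1 : ℝ) c₁).prod (convex_Ioo (-1 : ℝ) 0)) (hbox _ ?_ ?_) ?_ ?_)
      (hc.unseparated_left h hx hxa ?_))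
    · exact Ioo_subset_Ioo_right (by linarith [h1.2])
    · exact fun h' => lt_irrefl _ h'.2
    · exact ⟨⟨hz1, hlt⟩, hz3, hz4⟩
    · exact ⟨⟨by norm_num, by norm_num; linarith [h1.1]⟩, hz3, hz4⟩
    · exact ⟨⟨by norm_num, by norm_num⟩, hz3, by linarith⟩
  · exact absurd (mem_cutBarrier.2 (Or.inr (Or.inl (mem_botTail.2 ⟨heq, hz3.le, hz4.le⟩)))) hzE
  · refine Or.inr (Unseparated.trans (q := (3 / 2, z.2)) (Unseparated.of_convex
      ((convex_Ioo c₁ 2).prod (convex_Ioo (-1 : ℝ) 0)) (hbox _ ?_ ?_) ?_ ?_)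
      (hc.unseparated_right h hx hxb ?_))
    · exact Ioo_subset_Ioo_left (by linarith [h1.1])
    · exact fun h' => lt_irrefl _ h'.1
    · exact ⟨⟨hgt, hz2⟩, hz3, hz4⟩
    · exact ⟨⟨by linarith [h1.2], by norm_num⟩, hz3, hz4⟩
    · exact ⟨⟨by norm_num, by norm_num⟩, hz3, by linarith⟩

/-- A cut separates `a` from `b`. -/
lemma not_unseparated (h : SqConfig D₁ D₂ K a b) (hx : x ∈ K)
    (hc : IsCut D₁ D₂ x c₁ c₂ A₁ A₂) : ¬ Unseparated (cutBarrier c₁ c₂ A₁ A₂) a b := by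
  intro hab
  obtain ⟨g, hg, hge⟩ := Unseparated.hasLogRatio (hc.isClosed_cutBarrier h hx) hab
  have h1 := hc.c₁_mem
  have h2 := hc.c₂_mem
  have ha := h.ha
  have hb := h.hb
  set E := cutBarrier c₁ c₂ A₁ A₂ with hE
  have haE : a ∉ E := hab.left_notMem
  have hbE : b ∉ E := hab.symm.left_notMem
  set F : Set (ℝ × ℝ) := (botTail c₁ ∪ A₁) ∪ (A₂ ∪ topTail c₂) with hF
  set G : Set (ℝ × ℝ) := (Icc c₁ 2 ×ˢ {-1} ∪ {2} ×ˢ Icc (-1) 2) ∪ Icc c₂ 2 ×ˢ {2} with hG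
  have hFE : F ⊆ E := by
    rintro z ((hz | hz) | hz | hz) <;> rw [hE, mem_cutBarrier] <;> tauto
  have hGE : G ⊆ E := by
    refine Subset.trans ?_ outerFrame_subset_cutBarrier
    rintro z ((⟨⟨h3, h4⟩, h5⟩ | ⟨h3, h4, h5⟩) | ⟨⟨h3, h4⟩, h5⟩) <;> rw [mem_singleton_iff] at * <;>
      rw [mem_outerFrame]
    · exact ⟨⟨⟨by linarith [h1.1], h4⟩, by linarith, by linarith⟩, by tauto⟩
    · exact ⟨⟨⟨by linarith [h1.1], by linarith⟩, h4, h5⟩, by tauto⟩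
    · exact ⟨⟨⟨by linarith [h2.1], h4⟩, by linarith, by linarith⟩, by tauto⟩
  have hFc : IsPreconnected F := by
    refine IsPreconnected.union x (Or.inr hc.mem₁) (Or.inl hc.mem₂)
      (IsPreconnected.union (c₁, 0) ⟨rfl, by norm_num⟩ hc.bot_mem
        (isPreconnected_singleton.prod isPreconnected_Icc) hc.conn₁)
      (IsPreconnected.union (c₂, 1) hc.top_mem ⟨rfl, by norm_num⟩ hc.conn₂
        (isPreconnected_singleton.prod isPreconnected_Icc))
  have hGc : IsPreconnected G := by
    refine IsPreconnected.union (2, 2) (Or.inr ⟨rfl, by norm_num⟩) ⟨⟨by linarith [h2.2], le_rfl⟩, rfl⟩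
      (IsPreconnected.union (2, -1) ⟨⟨by linarith [h1.2], le_rfl⟩, rfl⟩ ⟨rfl, by norm_num⟩
        (isPreconnected_Icc.prod isPreconnected_singleton)
        (isPreconnected_singleton.prod isPreconnected_Icc))
        (isPreconnected_Icc.prod isPreconnected_singleton)
  have hFbox : ∀ z ∈ F, (z.2 = a.2 → 0 < z.1) ∧ (z.2 = b.2 → z.1 < 1) := by
    have hA : ∀ z ∈ E, z ∈ unitSq → (z.2 = a.2 → 0 < z.1) ∧ (z.2 = b.2 → z.1 < 1) := by
      intro z hzE hz
      rw [mem_unitSq] at hz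
      refine ⟨fun h3 => hz.1.1.lt_of_ne fun h4 => haE ?_, fun h3 => hz.1.2.lt_of_ne fun h4 => hbE ?_⟩
      · rwa [← show z = a from Prod.ext (h4.symm.trans ha.1.symm) h3]
      · rwa [← show z = b from Prod.ext (h4.trans hb.1.symm) h3]
    intro z hz
    have hzE := hFE hz
    rcases hz with (hz | hz) | hz | hz
    · have := mem_botTail.1 hz
      exact ⟨fun _ => by linarith [h1.1], fun _ => by linarith [h1.2]⟩
    · exact hA z hzE (hc.A₁_subset h hx hz)
    · exact hA z hzE (hc.A₂_subset h hx hz)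
    · have := mem_topTail.1 hz
      exact ⟨fun _ => by linarith [h2.1], fun _ => by linarith [h2.2]⟩
  have hGbox : ∀ z ∈ G, (z.2 = a.2 → 0 < z.1) ∧ (z.2 = b.2 → 1 < z.1) := by
    have := ha.2.1
    have := hb.2.1
    have := ha.2.2
    have := hb.2.2
    rintro z ((⟨⟨h3, h4⟩, h5⟩ | ⟨h3, h4, h5⟩) | ⟨⟨h3, h4⟩, h5⟩) <;> rw [mem_singleton_iff] at * <;>
      constructor <;> intro <;> linarith
  have hFa : ∀ z ∈ F, planeToComplex z - planeToComplex a ∈ Complex.slitPlane := by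
    intro z hz
    rw [Complex.mem_slitPlane_iff]
    by_cases h3 : z.2 = a.2
    · left
      have := (hFbox z hz).1 h3
      simpa [planeToComplex, ha.1]
    · right
      simpa [planeToComplex, sub_eq_zero]
  have hGa : ∀ z ∈ G, planeToComplex z - planeToComplex a ∈ Complex.slitPlane := by
    intro z hz
    rw [Complex.mem_slitPlane_iff]
    by_cases h3 : z.2 = a.2
    · left
      have := (hGbox z hz).1 h3
      simpa [planeToComplex, ha.1]
    · right
      simpa [planeToComplex, sub_eq_zero]
  have hFb : ∀ z ∈ F, planeToComplex b - planeToComplex z ∈ Complex.slitPlane := by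
    intro z hz
    rw [Complex.mem_slitPlane_iff]
    by_cases h3 : z.2 = b.2
    · left
      have := (hFbox z hz).2 h3
      simpa [planeToComplex, hb.1]
    · right
      simpa [planeToComplex, sub_eq_zero] using Ne.symm h3
  have hGb : ∀ z ∈ G, planeToComplex z - planeToComplex b ∈ Complex.slitPlane := by
    intro z hz
    rw [Complex.mem_slitPlane_iff]
    by_cases h3 : z.2 = b.2
    · left
      have := (hGbox z hz).2 h3
      simpa [planeToComplex, hb.1]
    · right
      simpa [planeToComplex, sub_eq_zero]
  have hcont := continuous_planeToComplex
  have hL : ∀ {S : Set (ℝ × ℝ)} {f k : ℝ × ℝ → ℂ}, Continuous f → Continuous k →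
      (∀ z ∈ S, f z ∈ Complex.slitPlane) → (∀ z ∈ S, k z ∈ Complex.slitPlane) →
      ContinuousOn (fun z => Complex.log (f z) - Complex.log (k z)) S :=
    fun hf hk hS hS' => (hf.continuousOn.clog hS).sub (hk.continuousOn.clog hS')
  have he1F : ((c₁, -1) : ℝ × ℝ) ∈ F := Or.inl (Or.inl ⟨rfl, by norm_num⟩)
  have he2F : ((c₂, 2) : ℝ × ℝ) ∈ F := Or.inr (Or.inr ⟨rfl, by norm_num⟩)
  have he1G : ((c₁, -1) : ℝ × ℝ) ∈ G := Or.inl (Or.inl ⟨⟨le_rfl, by linarith [h1.2]⟩, rfl⟩)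
  have he2G : ((c₂, 2) : ℝ × ℝ) ∈ G := Or.inr ⟨⟨le_rfl, by linarith [h2.2]⟩, rfl⟩
  have kF := hFc.sub_eq_of_exp_eq (hg.mono hFE)
    (hL (f := fun z => planeToComplex z - planeToComplex a)
      (k := fun z => planeToComplex b - planeToComplex z)
      (hcont.sub continuous_const) (continuous_const.sub hcont) hFa hFb) (-1)
    (fun z hz => by
      have h3 := Complex.slitPlane_ne_zero (hFa z hz)
      have h4 := Complex.slitPlane_ne_zero (hFb z hz)
      have h5 := hge z (hFE hz)
      have h6 : planeToComplex z - planeToComplex b ≠ 0 := by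
        rw [← neg_sub]; exact neg_ne_zero.2 h4
      rw [Complex.exp_sub, Complex.exp_log h3, Complex.exp_log h4, ← h5]
      field_simp
      ring) he1F he2F
  have kG := hGc.sub_eq_of_exp_eq (hg.mono hGE)
    (hL (f := fun z => planeToComplex z - planeToComplex a)
      (k := fun z => planeToComplex z - planeToComplex b)
      (hcont.sub continuous_const) (hcont.sub continuous_const) hGa hGb) 1
    (fun z hz => by
      have h3 := Complex.slitPlane_ne_zero (hGa z hz)
      have h4 := Complex.slitPlane_ne_zero (hGb z hz)
      have h5 := hge z (hGE hz)
      rw [Complex.exp_sub, Complex.exp_log h3, Complex.exp_log h4, ← h5]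
      field_simp) he1G he2G
  have key : Complex.log (-(planeToComplex (c₁, -1) - planeToComplex b)) -
      Complex.log (-(planeToComplex (c₂, 2) - planeToComplex b)) =
      Complex.log (planeToComplex (c₁, -1) - planeToComplex b) -
      Complex.log (planeToComplex (c₂, 2) - planeToComplex b) := by
    rw [neg_sub, neg_sub]
    linear_combination kF - kG
  have him := congrArg Complex.im key
  simp only [Complex.sub_im, Complex.log_im] at him
  rw [Complex.arg_neg_eq_arg_add_pi_of_im_neg, Complex.arg_neg_eq_arg_sub_pi_of_im_pos] at him
  · linarith [Real.pi_pos]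
  · simp only [planeToComplex, Complex.sub_im]
    linarith [hb.2.2]
  · simp only [planeToComplex, Complex.sub_im]
    linarith [hb.2.1]

/-- Every point of `K` off a cut is on the side of `a` or on the side of `b`. -/
lemma unseparated_or (h : SqConfig D₁ D₂ K a b) (hx : x ∈ K) (hxa : x ≠ a) (hxb : x ≠ b)
    (hc : IsCut D₁ D₂ x c₁ c₂ A₁ A₂) (hy : y ∈ K) (hyx : y ≠ x) :
    Unseparated (cutBarrier c₁ c₂ A₁ A₂) y a ∨ Unseparated (cutBarrier c₁ c₂ A₁ A₂) y b := by
  have hP₂ := hc.half₂ h hx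
  have hyE : y ∉ cutBarrier c₁ c₂ A₁ A₂ := fun h' => hyx (hc.eq_of_mem_cutBarrier h hx hy h')
  have hya : ({y, a} : Set (ℝ × ℝ)) ⊆ K := by rintro w (rfl | rfl); exacts [hy, h.a_mem]
  have hu : Unseparated (A₁ ∪ barrierTop c₂ A₂) y a := by
    refine Unseparated.union_of_outerFrame hc.closed₁ hP₂.closed ?_
      (fun z hz => Or.inr (hP₂.frame hz)) (unitSq_subset_outerSq (h.K_subset hy))
      ⟨D₂ ∪ {y, a}, h.preconn₂ hya, ?_, by simp, by simp⟩
      (hP₂.unseparated₂ h hy h.a_mem hyx hxa.symm hx)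
    · refine Set.Subsingleton.isPreconnected (Set.subsingleton_of_subset_singleton (a := x) ?_)
      rintro z ⟨hz1, hz2⟩
      rcases hc.subset₁ hz1 with h3 | h3
      · rcases hP₂.inside ⟨hz2, h.D₁_subset h3⟩ with h4 | h4
        · exact absurd h4 (Set.disjoint_left.1 h.disj h3)
        · exact h4
      · exact h3
    · refine Set.disjoint_left.2 fun z hz hz1 => ?_
      rcases hc.subset₁ hz1 with h3 | h3
      · rcases hz with hz | hz
        · exact Set.disjoint_left.1 h.disj h3 hz
        · exact h.notMem₁ (hya hz) h3
      · rw [mem_singleton_iff] at h3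
        subst h3
        rcases hz with hz | rfl | rfl
        exacts [h.notMem₂ hx hz, hyx rfl, hxa rfl]
  have hcover : cutBarrier c₁ c₂ A₁ A₂ ⊆
      (A₁ ∪ barrierTop c₂ A₂) ∪ Ioo (-1 : ℝ) 2 ×ˢ Ioo (-1 : ℝ) 0 := by
    rintro z ((hz | hz | hz) | hz)
    · exact Or.inl (Or.inr (Or.inl hz))
    · have h1 := hc.c₁_mem
      rw [mem_botTail] at hz
      rcases hz.2.1.eq_or_lt with h3 | h3
      · left; right; left
        rw [mem_outerFrame]
        exact ⟨⟨⟨by linarith [h1.1], by linarith [h1.2]⟩, by linarith, by linarith⟩,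
          Or.inr (Or.inr (Or.inl h3.symm))⟩
      rcases hz.2.2.eq_or_lt with h4 | h4
      · left; left
        rw [show z = (c₁, 0) from Prod.ext hz.1 h4]
        exact hc.bot_mem
      · exact Or.inr ⟨⟨by linarith [h1.1], by linarith [h1.2]⟩, h3, h4⟩
    · exact Or.inl (Or.inl hz)
    · exact Or.inl (Or.inr hz)
  rcases Unseparated.or_exists_mem (C := cutBarrier c₁ c₂ A₁ A₂)
    (B := Ioo (-1 : ℝ) 2 ×ˢ Ioo (-1 : ℝ) 0) (hc.isClosed_cutBarrier h hx)
    (isOpen_Ioo.prod isOpen_Ioo) hcover hu hyE with h3 | ⟨w, hw, h3⟩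
  · exact Or.inl h3
  · exact (hc.unseparated_below h hx hxa hxb hw h3.symm.left_notMem).imp h3.trans h3.trans

lemma exists_unseparated_mem_ball (h : SqConfig D₁ D₂ K a b) (hx : x ∈ K)
    (hc : IsCut D₁ D₂ x c₁ c₂ A₁ A₂) {p q : ℝ × ℝ} (hp : p ∈ K) (hq : q ∈ K)
    (hpx : p ≠ x) (hqx : q ≠ x) (hpq : ¬ Unseparated (cutBarrier c₁ c₂ A₁ A₂) p q)
    {r : ℝ} (hr : 0 < r) : ∃ w ∈ ball x r, Unseparated (cutBarrier c₁ c₂ A₁ A₂) p w := by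
  have hP₁ := hc.half₁ h hx
  have hP₂ := hc.half₂ h hx
  have hpE : p ∉ cutBarrier c₁ c₂ A₁ A₂ := fun h' => hpx (hc.eq_of_mem_cutBarrier h hx hp h')
  have hB : ∀ z ∈ ball x (min r 1), z ∉ outerFrame := by
    intro z hz
    apply notMem_outerFrame
    have h3 := mem_unitSq.1 (h.K_subset hx)
    rw [mem_ball, Prod.dist_eq, max_lt_iff] at hz
    have h4 := abs_lt.1 (hz.1.trans_le (min_le_right _ _))
    have h5 := abs_lt.1 (hz.2.trans_le (min_le_right _ _))
    rw [mem_outerSq]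
    exact ⟨⟨by linarith, by linarith⟩, by linarith, by linarith⟩
  have hu : Unseparated (barrierBot c₁ A₁ \ ball x (min r 1) ∪ barrierTop c₂ A₂ \ ball x (min r 1))
      p q := by
    refine Unseparated.union_of_outerFrame (hP₁.closed.sdiff isOpen_ball)
      (hP₂.closed.sdiff isOpen_ball) ?_
      (fun z hz => Or.inl ⟨hP₁.frame hz, fun h' => hB z h' hz⟩)
      (unitSq_subset_outerSq (h.K_subset hp)) ((hP₁.unseparated₁ h hp hq hpx hqx hx).mono sdiff_subset)
      ((hP₂.unseparated₂ h hp hq hpx hqx hx).mono sdiff_subset)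
    convert isPreconnected_outerFrame
    apply Subset.antisymm
    · rintro z ⟨⟨hz1, hz3⟩, hz2, -⟩
      rcases hP₁.inter_subset h hP₂ ⟨hz1, hz2⟩ with h3 | rfl
      · exact h3
      · exact absurd (mem_ball_self (by positivity)) hz3
    · exact fun z hz => ⟨⟨hP₁.frame hz, fun h' => hB z h' hz⟩, hP₂.frame hz, fun h' => hB z h' hz⟩
  have hcover : cutBarrier c₁ c₂ A₁ A₂ ⊆ (barrierBot c₁ A₁ \ ball x (min r 1) ∪
      barrierTop c₂ A₂ \ ball x (min r 1)) ∪ ball x (min r 1) := fun z hz => by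
    by_cases hzB : z ∈ ball x (min r 1)
    · exact Or.inr hzB
    · exact Or.inl (hz.imp (fun h' => ⟨h', hzB⟩) fun h' => ⟨h', hzB⟩)
  rcases Unseparated.or_exists_mem (C := cutBarrier c₁ c₂ A₁ A₂) (hc.isClosed_cutBarrier h hx)
    (isOpen_ball (x := x) (ε := min r 1)) hcover hu hpE with h3 | ⟨w, hw, h3⟩
  · exact absurd h3 hpq
  · exact ⟨w, ball_subset_ball (min_le_left _ _) hw, h3⟩

/-- The component of `a` with `x` adjoined. -/
lemma isPreconnected_insert (h : SqConfig D₁ D₂ K a b) (hx : x ∈ K)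
    (hc : IsCut D₁ D₂ x c₁ c₂ A₁ A₂) {p q : ℝ × ℝ} (hp : p ∈ K) (hq : q ∈ K)
    (hpx : p ≠ x) (hqx : q ≠ x) (hpq : ¬ Unseparated (cutBarrier c₁ c₂ A₁ A₂) p q) :
    IsPreconnected (insert x {w | Unseparated (cutBarrier c₁ c₂ A₁ A₂) p w}) := by
  refine Unseparated.isPreconnected_setOf.subset_closure (subset_insert _ _)
    (insert_subset (Metric.mem_closure_iff.2 fun r hr => ?_) subset_closure)
  obtain ⟨w, hw, hpw⟩ := hc.exists_unseparated_mem_ball h hx hp hq hpx hqx hpq hr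
  exact ⟨w, hpw, mem_ball'.1 hw⟩

end IsCut

/-- The nearest point of the unit square. -/
noncomputable def clampSq (z : ℝ × ℝ) : ℝ × ℝ := (max 0 (min 1 z.1), max 0 (min 1 z.2))

lemma continuous_clampSq : Continuous clampSq := by unfold clampSq; fun_prop

lemma clampSq_mem (z : ℝ × ℝ) : clampSq z ∈ unitSq := by
  rw [mem_unitSq]
  exact ⟨⟨le_max_left _ _, max_le zero_le_one (min_le_left _ _)⟩, le_max_left _ _,
    max_le zero_le_one (min_le_left _ _)⟩

lemma clampSq_of_mem {z : ℝ × ℝ} (hz : z ∈ unitSq) : clampSq z = z := by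
  rw [mem_unitSq] at hz
  ext
  · simp [clampSq, hz.1.1, hz.1.2]
  · simp [clampSq, hz.2.1, hz.2.2]

lemma clampSq_mem_unitSq_of_interior {z : ℝ × ℝ} (hz : clampSq z ∈ interior unitSq) :
    z ∈ unitSq := by
  rw [mem_interior_unitSq] at hz
  obtain ⟨⟨h1, h2⟩, h3, h4⟩ := hz
  simp only [clampSq, lt_max_iff, lt_irrefl, false_or, lt_min_iff, max_lt_iff, min_lt_iff] at *
  rw [mem_unitSq]
  exact ⟨⟨h1.2.le, h2.2.le⟩, h3.2.le, h4.2.le⟩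

lemma clampSq_eq_left {z a : ℝ × ℝ} (ha : a ∈ leftEdge) (h : clampSq z = a) :
    z.1 ≤ 0 ∧ z.2 = a.2 := by
  obtain ⟨h1, h2, h3⟩ := ha
  subst h
  simp only [clampSq, lt_max_iff, lt_irrefl, false_or, lt_min_iff, max_lt_iff, min_lt_iff,
    max_eq_left_iff, min_le_iff] at *
  have h4 := h2.2
  have h5 := h3.2
  refine ⟨h1.resolve_left (by norm_num), ?_⟩
  rw [min_eq_right h5.le, max_eq_right h4.le]

lemma clampSq_eq_right {z b : ℝ × ℝ} (hb : b ∈ rightEdge) (h : clampSq z = b) :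
    1 ≤ z.1 ∧ z.2 = b.2 := by
  obtain ⟨h1, h2, h3⟩ := hb
  subst h
  simp only [clampSq, lt_max_iff, lt_irrefl, false_or, lt_min_iff, max_lt_iff, min_lt_iff] at *
  have h4 := h2.2
  have h5 := h3.2
  refine ⟨?_, ?_⟩
  · by_contra! h6
    rcases max_choice 0 (min 1 z.1) with h7 | h7 <;> rw [h7] at h1
    · norm_num at h1
    · linarith [min_le_right 1 z.1]
  · rw [min_eq_right h5.le, max_eq_right h4.le]

namespace IsCut

variable {D₁ D₂ K : Set (ℝ × ℝ)} {a b x y z : ℝ × ℝ} {c₁ c₂ : ℝ} {A₁ A₂ : Set (ℝ × ℝ)}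

/-- Points of `K` on the side of `e` accumulate at `x`, when `e` is an end point of `K` and `R` is
the horizontal ray leading from it to infinity. -/
lemma exists_mem_ball_aux (h : SqConfig D₁ D₂ K a b) (hx : x ∈ K)
    (hc : IsCut D₁ D₂ x c₁ c₂ A₁ A₂) {e e' p q : ℝ × ℝ} {R : Set (ℝ × ℝ)} (heK : e ∈ K)
    (hee : ∀ z ∈ K, z ∈ frontier unitSq → z = e ∨ z = e')
    (hne : ¬ Unseparated (cutBarrier c₁ c₂ A₁ A₂) e e') (hR : IsClosed R)
    (hRy : ∀ z ∈ R, z.2 ∈ Ioo (0 : ℝ) 1)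
    (hRE : (cutBarrier c₁ c₂ A₁ A₂ ∩ R).Subsingleton)
    (hRF : cutBarrier c₁ c₂ A₁ A₂ ∩ R ⊆ outerFrame)
    (hce : ∀ z, clampSq z = e → z ∈ R)
    (hce' : ∀ z ∈ outerSq, z ∉ unitSq → clampSq z = e' →
      Unseparated (cutBarrier c₁ c₂ A₁ A₂) z e')
    (hpe : Unseparated (cutBarrier c₁ c₂ A₁ A₂) p e)
    (hqe : Unseparated (cutBarrier c₁ c₂ A₁ A₂) q e)
    (hp : p ∈ belowSq) (hq : q ∈ aboveSq) (hpD : clampSq p ∈ D₁) (hqD : clampSq q ∈ D₂)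
    {r : ℝ} (hr : 0 < r) : ∃ z ∈ K, z ∈ ball x r ∧ Unseparated (cutBarrier c₁ c₂ A₁ A₂) z e := by
  by_contra! hno
  set E := cutBarrier c₁ c₂ A₁ A₂ with hE
  have hEc : IsClosed E := hc.isClosed_cutBarrier h hx
  set M : Set (ℝ × ℝ) := {z | z ∈ K ∧ Unseparated E z e} with hM
  have hME : ∀ z ∈ M, z ∉ E := fun z hz => hz.2.left_notMem
  have hMc : IsClosed M := by
    refine isClosed_of_closure_subset fun z hz => ?_
    have hzK : z ∈ K := closure_minimal (fun w hw => hw.1) h.isClosed_K hz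
    refine ⟨hzK, ?_⟩
    have hzx : z ≠ x := by
      rintro rfl
      obtain ⟨w, hw, hwz⟩ := Metric.mem_closure_iff.1 hz r hr
      exact hno w hw.1 (mem_ball'.2 hwz) hw.2
    have hzE : z ∉ E := fun h' => hzx (hc.eq_of_mem_cutBarrier h hx hzK h')
    exact (Unseparated.of_mem_closure hEc
      (closure_mono (fun w hw => hw.2.symm) hz) hzE).symm
  have hpO : p ∈ outerSq := hpe.symm.mem_outerSq outerFrame_subset_cutBarrier
    (unitSq_subset_outerSq (h.K_subset heK))
  have hMR : Unseparated (M ∪ R) p q := by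
    have hd : ∀ S : Set (ℝ × ℝ), S ⊆ E → Disjoint S outerFrame → Disjoint S (M ∪ R) := by
      refine fun S hS hSF => Set.disjoint_left.2 fun z hz hz' => ?_
      rcases hz' with hz' | hz'
      · exact hME z hz' (hS hz)
      · exact Set.disjoint_left.1 hSF hz (hRF ⟨hS hz, hz'⟩)
    have hAF : ∀ A : Set (ℝ × ℝ), A ⊆ unitSq → Disjoint A outerFrame := fun A hA =>
      disjoint_unitSq_outerFrame.mono_left hA
    have h1 := hc.c₁_mem
    have h2 := hc.c₂_mem
    have hT₁ : ({c₁} ×ˢ Icc (-1 / 2) 0 : Set (ℝ × ℝ)) ⊆ botTail c₁ :=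
      prod_mono le_rfl (Icc_subset_Icc_left (by norm_num))
    have hT₂ : ({c₂} ×ˢ Icc 1 (3 / 2) : Set (ℝ × ℝ)) ⊆ topTail c₂ :=
      prod_mono le_rfl (Icc_subset_Icc_right (by norm_num))
    refine Unseparated.trans (q := (c₁, -1 / 2)) (Unseparated.of_convex convex_belowSq ?_ hp
      (show (-1 / 2 : ℝ) < 0 by norm_num)) (Unseparated.trans (q := (c₂, 3 / 2))
      ⟨({c₁} ×ˢ Icc (-1 / 2) 0 ∪ A₁) ∪ (A₂ ∪ {c₂} ×ˢ Icc 1 (3 / 2)), ?_, ?_,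
        Or.inl (Or.inl ⟨rfl, by norm_num⟩), Or.inr (Or.inr ⟨rfl, by norm_num⟩)⟩
      (Unseparated.of_convex convex_aboveSq ?_ (show (1 : ℝ) < 3 / 2 by norm_num) hq))
    · refine Set.disjoint_left.2 fun z (hz : z.2 < 0) hz' => ?_
      rcases hz' with hz' | hz'
      · linarith [(mem_unitSq.1 (h.K_subset hz'.1)).2.1]
      · linarith [(hRy z hz').1]
    · exact IsPreconnected.union x (Or.inr hc.mem₁) (Or.inl hc.mem₂)
        (IsPreconnected.union (c₁, 0) ⟨rfl, by norm_num⟩ hc.bot_mem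
          (isPreconnected_singleton.prod isPreconnected_Icc) hc.conn₁)
        (IsPreconnected.union (c₂, 1) hc.top_mem ⟨rfl, by norm_num⟩ hc.conn₂
          (isPreconnected_singleton.prod isPreconnected_Icc))
    · apply hd
      · rintro z ((hz | hz) | hz | hz) <;> rw [hE, mem_cutBarrier]
        · exact Or.inr (Or.inl (hT₁ hz))
        · tauto
        · tauto
        · exact Or.inr (Or.inr (Or.inl (hT₂ hz)))
      · refine Disjoint.union_left (Disjoint.union_left ?_ (hAF _ (hc.A₁_subset h hx)))
          (Disjoint.union_left (hAF _ (hc.A₂_subset h hx)) ?_)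
        · refine Set.disjoint_left.2 ?_
          rintro ⟨u, v⟩ ⟨rfl, hz1, hz2⟩
          exact notMem_outerFrame (mem_outerSq.2 ⟨⟨by linarith [h1.1], by linarith [h1.2]⟩,
            by linarith, by linarith⟩)
        · refine Set.disjoint_left.2 ?_
          rintro ⟨u, v⟩ ⟨rfl, hz1, hz2⟩
          exact notMem_outerFrame (mem_outerSq.2 ⟨⟨by linarith [h2.1], by linarith [h2.2]⟩,
            by linarith, by linarith⟩)
    · refine Set.disjoint_left.2 fun z (hz : 1 < z.2) hz' => ?_
      rcases hz' with hz' | hz'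
      · linarith [(mem_unitSq.1 (h.K_subset hz'.1)).2.2]
      · linarith [(hRy z hz').2]
  obtain ⟨S, hS, hSd, hpS, hqS⟩ := Unseparated.union_of_outerFrame hEc (hMc.union hR)
    ((hRE.anti fun z hz => ⟨hz.1, hz.2.resolve_left fun h' => hME z h' hz.1⟩).isPreconnected)
    (fun z hz => Or.inl (outerFrame_subset_cutBarrier hz)) hpO (hpe.trans hqe.symm) hMR
  have hSe : ∀ z ∈ S, Unseparated E z e := fun z hz =>
    Unseparated.trans ⟨S, hS, hSd.mono_right subset_union_left, hz, hpS⟩ hpe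
  have hSK : ∀ z ∈ S, clampSq z ∉ K := by
    intro z hz hzK
    have hzR : z ∉ R := fun h' => Set.disjoint_left.1 hSd hz (Or.inr (Or.inr h'))
    by_cases hzu : z ∈ unitSq
    · rw [clampSq_of_mem hzu] at hzK
      exact Set.disjoint_left.1 hSd hz (Or.inr (Or.inl ⟨hzK, hSe z hz⟩))
    · rcases hee _ hzK ⟨subset_closure (h.K_subset hzK),
        fun h' => hzu (clampSq_mem_unitSq_of_interior h')⟩ with h3 | h3
      · exact hzR (hce z h3)
      · have hzO : z ∈ outerSq := (hSe z hz).symm.mem_outerSq outerFrame_subset_cutBarrier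
          (unitSq_subset_outerSq (h.K_subset heK))
        exact hne ((hSe z hz).symm.trans (hce' z hzO hzu h3))
  obtain ⟨U, hU, hUD⟩ := h.open₁
  obtain ⟨V, hV, hVD⟩ := h.open₂
  obtain ⟨w, hw, hwU, hwV⟩ := (hS.image clampSq continuous_clampSq.continuousOn) U V hU hV
    (by
      rintro _ ⟨z, hz, rfl⟩
      have h3 := clampSq_mem z
      rw [h.cover] at h3
      rcases h3 with (h3 | h3) | h3
      · exact Or.inl (hUD ▸ h3).1
      · exact Or.inr (hVD ▸ h3).1
      · exact absurd h3 (hSK z hz))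
    ⟨_, mem_image_of_mem _ hpS, (hUD ▸ hpD).1⟩ ⟨_, mem_image_of_mem _ hqS, (hVD ▸ hqD).1⟩
  obtain ⟨z, hz, rfl⟩ := hw
  exact Set.disjoint_left.1 h.disj (hUD.superset ⟨hwU, clampSq_mem z⟩)
    (hVD.superset ⟨hwV, clampSq_mem z⟩)

lemma exists_mem_ball_right (h : SqConfig D₁ D₂ K a b) (hx : x ∈ K) (hxa : x ≠ a) (hxb : x ≠ b)
    (hc : IsCut D₁ D₂ x c₁ c₂ A₁ A₂) {r : ℝ} (hr : 0 < r) :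
    ∃ z ∈ K, z ∈ ball x r ∧ Unseparated (cutBarrier c₁ c₂ A₁ A₂) z b := by
  have ha := h.ha
  have hb := h.hb
  have h1 := hc.c₁_mem
  have h2 := hc.c₂_mem
  have hbE : b ∉ cutBarrier c₁ c₂ A₁ A₂ := fun h' => hxb (hc.eq_of_mem_cutBarrier h hx h.b_mem h').symm
  have hER : ∀ z ∈ cutBarrier c₁ c₂ A₁ A₂, 1 ≤ z.1 → z.2 = b.2 → z ∈ outerFrame ∧ z.1 = 2 := by
    intro z hzE hz1 hz2
    have hzb : z.1 ≤ 1 → z = b := fun h0 => Prod.ext ((le_antisymm h0 hz1).trans hb.1.symm) hz2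
    rcases mem_cutBarrier.1 hzE with h' | h' | h' | h' | h'
    · refine ⟨h', ?_⟩
      rcases (mem_outerFrame.1 h').2 with h3 | h3 | h3 | h3 <;> linarith [hb.2.1, hb.2.2]
    · linarith [(mem_botTail.1 h').1, h1.2]
    · linarith [(mem_topTail.1 h').1, h2.2]
    · exact absurd (hzb (mem_unitSq.1 (hc.A₁_subset h hx h')).1.2 ▸ hzE) hbE
    · exact absurd (hzb (mem_unitSq.1 (hc.A₂_subset h hx h')).1.2 ▸ hzE) hbE
  refine hc.exists_mem_ball_aux h hx (e' := a) (p := (3 / 2, -1 / 2)) (q := (3 / 2, 3 / 2))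
    (R := Ici 1 ×ˢ {b.2}) h.b_mem
    (fun z hz hzf => ?_) (fun h' => hc.not_unseparated h hx h'.symm)
    (isClosed_Ici.prod isClosed_singleton) ?_ ?_ ?_ ?_ ?_ (hc.unseparated_right h hx hxb ?_)
    (hc.unseparated_right h hx hxb ?_) ?_ ?_ ?_ ?_ hr
  · exact (h.bdry.subset ⟨hz, hzf⟩).symm
  · rintro z ⟨-, hz⟩
    rw [mem_singleton_iff] at hz
    exact hz ▸ hb.2
  · rintro z ⟨hzE, hz1, hz2⟩ w ⟨hwE, hw1, hw2⟩
    exact Prod.ext ((hER z hzE hz1 hz2).2.trans (hER w hwE hw1 hw2).2.symm) (hz2.trans hw2.symm)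
  · exact fun z hz => (hER z hz.1 hz.2.1 hz.2.2).1
  · exact fun z hz => clampSq_eq_right hb hz
  · intro z hz hzu hza
    obtain ⟨h3, h4⟩ := clampSq_eq_left ha hza
    rw [mem_outerSq] at hz
    refine hc.unseparated_left h hx hxa ⟨⟨hz.1.1, h3.lt_of_ne fun h5 => hzu ?_⟩, hz.2⟩
    rw [show z = a from Prod.ext (h5.trans ha.1.symm) h4]
    exact h.K_subset h.a_mem
  · exact ⟨⟨by norm_num, by norm_num⟩, by norm_num, by norm_num⟩
  · exact ⟨⟨by norm_num, by norm_num⟩, by norm_num, by norm_num⟩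
  · exact show (-1 / 2 : ℝ) < 0 by norm_num
  · exact show (1 : ℝ) < 3 / 2 by norm_num
  · convert h.bot 1 (by simp) using 1
    ext <;> norm_num [clampSq]
  · convert h.top 1 (by simp) using 1
    ext <;> norm_num [clampSq]

lemma exists_mem_ball_left (h : SqConfig D₁ D₂ K a b) (hx : x ∈ K) (hxa : x ≠ a) (hxb : x ≠ b)
    (hc : IsCut D₁ D₂ x c₁ c₂ A₁ A₂) {r : ℝ} (hr : 0 < r) :
    ∃ z ∈ K, z ∈ ball x r ∧ Unseparated (cutBarrier c₁ c₂ A₁ A₂) z a := by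
  have ha := h.ha
  have hb := h.hb
  have h1 := hc.c₁_mem
  have h2 := hc.c₂_mem
  have haE : a ∉ cutBarrier c₁ c₂ A₁ A₂ := fun h' => hxa (hc.eq_of_mem_cutBarrier h hx h.a_mem h').symm
  have hER : ∀ z ∈ cutBarrier c₁ c₂ A₁ A₂, z.1 ≤ 0 → z.2 = a.2 → z ∈ outerFrame ∧ z.1 = -1 := by
    intro z hzE hz1 hz2
    have hza : 0 ≤ z.1 → z = a := fun h0 => Prod.ext ((le_antisymm hz1 h0).trans ha.1.symm) hz2
    rcases mem_cutBarrier.1 hzE with h' | h' | h' | h' | h'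
    · refine ⟨h', ?_⟩
      rcases (mem_outerFrame.1 h').2 with h3 | h3 | h3 | h3 <;> linarith [ha.2.1, ha.2.2]
    · linarith [(mem_botTail.1 h').1, h1.1]
    · linarith [(mem_topTail.1 h').1, h2.1]
    · exact absurd (hza (mem_unitSq.1 (hc.A₁_subset h hx h')).1.1 ▸ hzE) haE
    · exact absurd (hza (mem_unitSq.1 (hc.A₂_subset h hx h')).1.1 ▸ hzE) haE
  refine hc.exists_mem_ball_aux h hx (e' := b) (p := (-1 / 2, -1 / 2)) (q := (-1 / 2, 3 / 2))
    (R := Iic 0 ×ˢ {a.2}) h.a_mem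
    (fun z hz hzf => ?_) (hc.not_unseparated h hx)
    (isClosed_Iic.prod isClosed_singleton) ?_ ?_ ?_ ?_ ?_ (hc.unseparated_left h hx hxa ?_)
    (hc.unseparated_left h hx hxa ?_) ?_ ?_ ?_ ?_ hr
  · exact h.bdry.subset ⟨hz, hzf⟩
  · rintro z ⟨-, hz⟩
    rw [mem_singleton_iff] at hz
    exact hz ▸ ha.2
  · rintro z ⟨hzE, hz1, hz2⟩ w ⟨hwE, hw1, hw2⟩
    exact Prod.ext ((hER z hzE hz1 hz2).2.trans (hER w hwE hw1 hw2).2.symm) (hz2.trans hw2.symm)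
  · exact fun z hz => (hER z hz.1 hz.2.1 hz.2.2).1
  · exact fun z hz => clampSq_eq_left ha hz
  · intro z hz hzu hzb
    obtain ⟨h3, h4⟩ := clampSq_eq_right hb hzb
    rw [mem_outerSq] at hz
    refine hc.unseparated_right h hx hxb ⟨⟨h3.lt_of_ne fun h5 => hzu ?_, hz.1.2⟩, hz.2⟩
    rw [show z = b from Prod.ext (h5.symm.trans hb.1.symm) h4]
    exact h.K_subset h.b_mem
  · exact ⟨⟨by norm_num, by norm_num⟩, by norm_num, by norm_num⟩
  · exact ⟨⟨by norm_num, by norm_num⟩, by norm_num, by norm_num⟩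
  · exact show (-1 / 2 : ℝ) < 0 by norm_num
  · exact show (1 : ℝ) < 3 / 2 by norm_num
  · convert h.bot 0 (by simp) using 1
    ext <;> norm_num [clampSq]
  · convert h.top 0 (by simp) using 1
    ext <;> norm_num [clampSq]

end IsCut

/-- A path from `q` to `x` that stays in `D` until it reaches `x`. -/
structure IsHalfArc (D : Set (ℝ × ℝ)) (q x : ℝ × ℝ) (γ : ℝ → ℝ × ℝ) : Prop where
  cont : ContinuousOn γ (Icc 0 1)
  zero : γ 0 = q
  one : γ 1 = x
  mem : ∀ t ∈ Ico (0 : ℝ) 1, γ t ∈ D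

namespace IsHalfArc

variable {D : Set (ℝ × ℝ)} {q x z : ℝ × ℝ} {α β : ℝ → ℝ × ℝ}

lemma isClosed_image (h : IsHalfArc D q x α) : IsClosed (α '' Icc 0 1) :=
  (isCompact_Icc.image_of_continuousOn h.cont).isClosed

lemma image_subset (h : IsHalfArc D q x α) : α '' Icc 0 1 ⊆ D ∪ {x} := by
  rintro _ ⟨t, ht, rfl⟩
  rcases ht.2.eq_or_lt with rfl | h1
  · exact Or.inr h.one
  · exact Or.inl (h.mem t ⟨ht.1, h1⟩)

/-- Two half arcs with the same origin can be merged into a tripod: the continuum `A` joins `q` to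
`z` and follows `α` except for a connected leg around `z`. -/
lemma exists_leg (hα : IsHalfArc D q x α) (hβ : IsHalfArc D q z β) (hx : x ∉ D) (hz : z ∉ D)
    (hxz : x ≠ z) : ∃ A leg : Set (ℝ × ℝ), IsClosed A ∧ IsPreconnected A ∧ q ∈ A ∧ z ∈ A ∧
      A ⊆ D ∪ {z} ∧ A ⊆ α '' Icc 0 1 ∪ leg ∧ IsPreconnected leg ∧ z ∈ leg ∧
      Disjoint leg (α '' Icc 0 1) ∧ leg ⊆ D ∪ {z} := by
  set H : Set ℝ := Icc 0 1 ∩ β ⁻¹' (α '' Icc 0 1) with hH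
  have hHc : IsCompact H :=
    isCompact_Icc.of_isClosed_subset (hβ.cont.preimage_isClosed_of_isClosed isClosed_Icc
      hα.isClosed_image) inter_subset_left
  have hH0 : H.Nonempty := ⟨0, by simp, 0, by simp, by rw [hα.zero, hβ.zero]⟩
  obtain ⟨s, ⟨hs, t, ht, hts⟩, hmax⟩ := hHc.exists_isGreatest hH0
  have hs1 : s < 1 := hs.2.lt_of_ne fun h1 => by
    have h2 := hα.image_subset (mem_image_of_mem α ht)
    rw [hts, h1, hβ.one] at h2
    exact h2.elim hz fun h3 => hxz (mem_singleton_iff.1 h3).symm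
  have ht1 : t < 1 := ht.2.lt_of_ne fun h1 => by
    have h2 := hβ.mem s ⟨hs.1, hs1⟩
    rw [← hts, h1, hα.one] at h2
    exact hx h2
  have hβs : β '' Icc s 1 ⊆ D ∪ {z} :=
    (image_mono (Icc_subset_Icc_left hs.1)).trans hβ.image_subset
  refine ⟨α '' Icc 0 t ∪ β '' Icc s 1, β '' Ioc s 1, ?_, ?_, ?_, ?_, ?_, ?_, ?_, ?_, ?_, ?_⟩
  · exact (isCompact_Icc.image_of_continuousOn (hα.cont.mono (Icc_subset_Icc_right ht.2))).isClosed
      |>.union (isCompact_Icc.image_of_continuousOn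
        (hβ.cont.mono (Icc_subset_Icc_left hs.1))).isClosed
  · exact IsPreconnected.union (α t) ⟨t, ⟨ht.1, le_rfl⟩, rfl⟩ ⟨s, ⟨le_rfl, hs.2⟩, hts.symm⟩
      (isPreconnected_Icc.image _ (hα.cont.mono (Icc_subset_Icc_right ht.2)))
      (isPreconnected_Icc.image _ (hβ.cont.mono (Icc_subset_Icc_left hs.1)))
  · exact Or.inl ⟨0, ⟨le_rfl, ht.1⟩, hα.zero⟩
  · exact Or.inr ⟨1, ⟨hs.2, le_rfl⟩, hβ.one⟩
  · refine union_subset ?_ hβs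
    rintro _ ⟨u, hu, rfl⟩
    exact Or.inl (hα.mem u ⟨hu.1, hu.2.trans_lt ht1⟩)
  · refine union_subset ((image_mono (Icc_subset_Icc_right ht.2)).trans subset_union_left) ?_
    rintro _ ⟨u, hu, rfl⟩
    rcases hu.1.eq_or_lt with rfl | h1
    · exact Or.inl ⟨t, ht, hts⟩
    · exact Or.inr ⟨u, ⟨h1, hu.2⟩, rfl⟩
  · exact isPreconnected_Ioc.image _
      (hβ.cont.mono (Ioc_subset_Icc_self.trans (Icc_subset_Icc_left hs.1)))
  · exact ⟨1, ⟨hs1, le_rfl⟩, hβ.one⟩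
  · refine Set.disjoint_left.2 ?_
    rintro _ ⟨u, hu, rfl⟩ hα'
    exact absurd (hmax ⟨⟨hs.1.trans hu.1.le, hu.2⟩, hα'⟩) (not_le.2 hu.1)
  · exact (image_mono Ioc_subset_Icc_self).trans hβs

lemma isCut {D₁ D₂ : Set (ℝ × ℝ)} (hα : IsHalfArc D₁ (1 / 2, 0) x α)
    (hβ : IsHalfArc D₂ (1 / 2, 1) x β) :
    IsCut D₁ D₂ x (1 / 2) (1 / 2) (α '' Icc 0 1) (β '' Icc 0 1) where
  c₁_mem := by norm_num
  c₂_mem := by norm_num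
  closed₁ := hα.isClosed_image
  closed₂ := hβ.isClosed_image
  conn₁ := isPreconnected_Icc.image _ hα.cont
  conn₂ := isPreconnected_Icc.image _ hβ.cont
  mem₁ := ⟨1, by simp, hα.one⟩
  mem₂ := ⟨1, by simp, hβ.one⟩
  bot_mem := ⟨0, by simp, hα.zero⟩
  top_mem := ⟨0, by simp, hβ.zero⟩
  subset₁ := hα.image_subset
  subset₂ := hβ.image_subset

end IsHalfArc

/-- `y` lies on the side of `e` of some cut at `x`. -/
def OnSide (D₁ D₂ : Set (ℝ × ℝ)) (e x y : ℝ × ℝ) : Prop :=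
  ∃ c₁ c₂ A₁ A₂, IsCut D₁ D₂ x c₁ c₂ A₁ A₂ ∧ Unseparated (cutBarrier c₁ c₂ A₁ A₂) y e

namespace OnSide

variable {D₁ D₂ K : Set (ℝ × ℝ)} {a b e e' x y z : ℝ × ℝ} {c₁ c₂ : ℝ} {A₁ A₂ : Set (ℝ × ℝ)}

lemma ne_left (h : OnSide D₁ D₂ e x y) : y ≠ x := by
  obtain ⟨_, _, _, _, hc, hu⟩ := h
  rintro rfl
  exact hu.left_notMem hc.mem_cutBarrier_self

lemma ne_right (h : OnSide D₁ D₂ e x y) : e ≠ x := by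
  obtain ⟨_, _, _, _, hc, hu⟩ := h
  rintro rfl
  exact hu.symm.left_notMem hc.mem_cutBarrier_self

lemma unseparated (h : SqConfig D₁ D₂ K a b) (hx : x ∈ K) (he : e ∈ K) (hy : y ∈ K)
    (hs : OnSide D₁ D₂ e x y) (hc : IsCut D₁ D₂ x c₁ c₂ A₁ A₂) :
    Unseparated (cutBarrier c₁ c₂ A₁ A₂) y e := by
  have h1 := hs.ne_left
  have h2 := hs.ne_right
  obtain ⟨_, _, _, _, hc', hu⟩ := hs
  exact IsHalfBarrier.unseparated_iff h hx hy he h1 h2 (hc'.half₁ h hx) (hc'.half₂ h hx)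
    (hc.half₁ h hx) (hc.half₂ h hx) hu

/-- If `z` lies on the side of `e'` of `x`, then `x` and everything on its side of `e` lie on the
side of `e` of `z`. -/
lemma of_opposite (h : SqConfig D₁ D₂ K a b) (hx : x ∈ K) (he : e ∈ K) (he' : e' ∈ K)
    (hex : e ≠ x) (hz : z ∈ K)
    (hne : ∀ c₁ c₂ A₁ A₂, IsCut D₁ D₂ x c₁ c₂ A₁ A₂ →
      ¬ Unseparated (cutBarrier c₁ c₂ A₁ A₂) e e')
    {α₁ α₂ β₁ β₂ : ℝ → ℝ × ℝ} (hα₁ : IsHalfArc D₁ (1 / 2, 0) x α₁)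
    (hα₂ : IsHalfArc D₂ (1 / 2, 1) x α₂) (hβ₁ : IsHalfArc D₁ (1 / 2, 0) z β₁)
    (hβ₂ : IsHalfArc D₂ (1 / 2, 1) z β₂) (hzx : OnSide D₁ D₂ e' x z)
    (hy : y = x ∨ y ∈ K ∧ OnSide D₁ D₂ e x y) : OnSide D₁ D₂ e z y := by
  have hc := hα₁.isCut hα₂
  have hxz : x ≠ z := hzx.ne_left.symm
  have hu := hzx.unseparated h hx he' hz hc
  have hne := hne _ _ _ _ hc
  set E := cutBarrier (1 / 2) (1 / 2) (α₁ '' Icc 0 1) (α₂ '' Icc 0 1) with hE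
  obtain ⟨B₁, l₁, hB₁, hB₁c, hqB₁, hzB₁, hB₁D, hB₁l, hl₁c, hzl₁, hl₁, hl₁D⟩ :=
    hα₁.exists_leg hβ₁ (h.notMem₁ hx) (h.notMem₁ hz) hxz
  obtain ⟨B₂, l₂, hB₂, hB₂c, hqB₂, hzB₂, hB₂D, hB₂l, hl₂c, hzl₂, hl₂, hl₂D⟩ :=
    hα₂.exists_leg hβ₂ (h.notMem₂ hx) (h.notMem₂ hz) hxz
  have hc' : IsCut D₁ D₂ z (1 / 2) (1 / 2) B₁ B₂ := ⟨by norm_num, by norm_num, hB₁, hB₂, hB₁c, hB₂c,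
    hzB₁, hzB₂, hqB₁, hqB₂, hB₁D, hB₂D⟩
  have hleg : ∀ l : Set (ℝ × ℝ), IsPreconnected l → z ∈ l → l ⊆ unitSq → Disjoint l (α₁ '' Icc 0 1) →
      Disjoint l (α₂ '' Icc 0 1) → ∀ w ∈ l, ¬ Unseparated E e w := by
    refine fun l hl hzl hlQ hl1 hl2 w hw hwe => hne (hwe.trans (Unseparated.trans ?_ hu))
    refine ⟨l, hl, Set.disjoint_left.2 fun v hv hvE => ?_, hw, hzl⟩
    have hv' := mem_unitSq.1 (hlQ hv)
    rcases mem_cutBarrier.1 hvE with h' | h' | h' | h' | h'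
    · exact notMem_outerFrame (unitSq_subset_outerSq (hlQ hv)) h'
    · rw [mem_botTail] at h'
      refine Set.disjoint_left.1 hl1 hv ?_
      rw [show v = (1 / 2, 0) from Prod.ext h'.1 (le_antisymm h'.2.2 hv'.2.1)]
      exact hc.bot_mem
    · rw [mem_topTail] at h'
      refine Set.disjoint_left.1 hl2 hv ?_
      rw [show v = (1 / 2, 1) from Prod.ext h'.1 (le_antisymm hv'.2.2 h'.2.1)]
      exact hc.top_mem
    · exact Set.disjoint_left.1 hl1 hv h'
    · exact Set.disjoint_left.1 hl2 hv h'
  have hzQ : {z} ⊆ unitSq := singleton_subset_iff.2 (h.K_subset hz)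
  have hn₁ := hleg l₁ hl₁c hzl₁ (hl₁D.trans (union_subset h.D₁_subset hzQ)) hl₁
    (Set.disjoint_left.2 fun v hv hv' => by
      rcases (hl₁D hv).imp_right mem_singleton_iff.1 with h1 | h1 <;>
        rcases (hc.subset₂ hv').imp_right mem_singleton_iff.1 with h2 | h2
      · exact Set.disjoint_left.1 h.disj h1 h2
      · exact h.notMem₁ hx (h2 ▸ h1)
      · exact h.notMem₂ hz (h1 ▸ h2)
      · exact hxz (h2.symm.trans h1))
  have hn₂ := hleg l₂ hl₂c hzl₂ (hl₂D.trans (union_subset h.D₂_subset hzQ))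
    (Set.disjoint_left.2 fun v hv hv' => by
      rcases (hl₂D hv).imp_right mem_singleton_iff.1 with h1 | h1 <;>
        rcases (hc.subset₁ hv').imp_right mem_singleton_iff.1 with h2 | h2
      · exact Set.disjoint_left.1 h.disj h2 h1
      · exact h.notMem₂ hx (h2 ▸ h1)
      · exact h.notMem₁ hz (h1 ▸ h2)
      · exact hxz (h2.symm.trans h1)) hl₂
  have heE : e ∉ E := fun h' => hex (hc.eq_of_mem_cutBarrier h hx he h')
  have hcov : cutBarrier (1 / 2) (1 / 2) B₁ B₂ ⊆ E ∪ (l₁ ∪ l₂) := by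
    intro v hv
    rw [mem_union, hE, mem_cutBarrier]
    rcases mem_cutBarrier.1 hv with h' | h' | h' | h' | h'
    · tauto
    · tauto
    · tauto
    · rcases hB₁l h' with h' | h'
      · tauto
      · exact Or.inr (Or.inl h')
    · rcases hB₂l h' with h' | h'
      · tauto
      · exact Or.inr (Or.inr h')
  refine ⟨_, _, _, _, hc', insert x {w | Unseparated E e w},
    hc.isPreconnected_insert h hx he he' hex hzx.ne_right hne, Set.disjoint_left.2 ?_, ?_,
    Or.inr (Unseparated.of_convex (convex_singleton e) (by simpa using heE) rfl rfl)⟩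
  · rintro v (rfl | hv) hv'
    · exact hxz (hc'.eq_of_mem_cutBarrier h hz hx hv')
    · rcases hcov hv' with h1 | h1 | h1
      · exact Unseparated.left_notMem (Unseparated.symm hv) h1
      · exact hn₁ v h1 hv
      · exact hn₂ v h1 hv
  · rcases hy with rfl | ⟨hyK, hy⟩
    · exact Or.inl rfl
    · exact Or.inr (hy.unseparated h hx he hyK hc).symm

end OnSide

/-- In a compact linearly ordered metric space with open rays, the intervals `[z₀, z₁]` have
arbitrarily small diameter when `z₀` is a limit from above. -/
lemma exists_lt_diam_lt {X : Type*} [PseudoMetricSpace X] {K : Set X} (hK : IsCompact K)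
    {lt : X → X → Prop} (hirr : ∀ x, ¬ lt x x)
    (htrans : ∀ x ∈ K, ∀ y ∈ K, ∀ z ∈ K, lt x y → lt y z → lt x z)
    (htri : ∀ x ∈ K, ∀ y ∈ K, x ≠ y → lt x y ∨ lt y x)
    (hlow : ∀ x ∈ K, ∃ U, IsOpen U ∧ ∀ y ∈ K, lt y x ↔ y ∈ U)
    (hup : ∀ x ∈ K, ∃ U, IsOpen U ∧ ∀ y ∈ K, lt x y ↔ y ∈ U) {z₀ : X} (hz₀ : z₀ ∈ K)
    (hacc : z₀ ∈ closure {y | y ∈ K ∧ lt z₀ y}) {ε : ℝ} (hε : 0 < ε) :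
    ∃ z₁ ∈ K, lt z₀ z₁ ∧
      diam {z | z ∈ K ∧ (z₀ = z ∨ lt z₀ z) ∧ (z = z₁ ∨ lt z z₁)} < ε := by
  by_contra! hno
  obtain ⟨z, hz, hzlim⟩ := mem_closure_iff_seq_limit.1 hacc
  have hw : ∀ n, ∃ w ∈ K, (z₀ = w ∨ lt z₀ w) ∧ (w = z n ∨ lt w (z n)) ∧ ε / 3 ≤ dist w z₀ := by
    intro n
    by_contra! hsmall
    have h1 : diam {w | w ∈ K ∧ (z₀ = w ∨ lt z₀ w) ∧ (w = z n ∨ lt w (z n))} ≤ 2 * (ε / 3) :=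
      (diam_mono (fun w hw => mem_closedBall.2 (hsmall w hw.1 hw.2.1 hw.2.2).le)
        isBounded_closedBall).trans (diam_closedBall (by positivity))
    linarith [hno (z n) (hz n).1 (hz n).2]
  choose w hwK hzw hwz hwε using hw
  obtain ⟨v, hv, φ, hφ, hlim⟩ := hK.tendsto_subseq hwK
  have hvε : ε / 3 ≤ dist v z₀ :=
    ge_of_tendsto' (hlim.dist tendsto_const_nhds) fun n => hwε (φ n)
  have hne : z₀ ≠ v := by
    rintro rfl
    rw [dist_self] at hvε
    linarith
  rcases htri z₀ hz₀ v hv hne with hlt | hlt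
  · obtain ⟨U, hU, hUv⟩ := hlow v hv
    obtain ⟨n, hn⟩ := (hzlim.eventually (hU.mem_nhds ((hUv z₀ hz₀).1 hlt))).exists
    have hzn := (hUv _ (hz n).1).2 hn
    obtain ⟨V, hV, hVn⟩ := hlow (z n) (hz n).1
    obtain ⟨W, hW, hWn⟩ := hup (z n) (hz n).1
    obtain ⟨m, hm₁, hm₂⟩ := (((hzlim.comp hφ.tendsto_atTop).eventually
      (hV.mem_nhds ((hVn z₀ hz₀).1 (hz n).2))).and
      (hlim.eventually (hW.mem_nhds ((hWn v hv).1 hzn)))).exists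
    have h1 := (hVn _ (hz (φ m)).1).2 hm₁
    have h2 := (hWn _ (hwK (φ m))).2 hm₂
    have h3 : lt (w (φ m)) (z n) := by
      rcases hwz (φ m) with h3 | h3
      · exact h3 ▸ h1
      · exact htrans _ (hwK _) _ (hz _).1 _ (hz n).1 h3 h1
    exact hirr _ (htrans _ (hz n).1 _ (hwK _) _ (hz n).1 h2 h3)
  · obtain ⟨U, hU, hUv⟩ := hlow z₀ hz₀
    obtain ⟨n, hn⟩ := (hlim.eventually (hU.mem_nhds ((hUv v hv).1 hlt))).exists
    have h1 := (hUv _ (hwK (φ n))).2 hn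
    rcases hzw (φ n) with h2 | h2
    · rw [← h2] at h1
      exact hirr _ h1
    · exact hirr _ (htrans _ hz₀ _ (hwK _) _ hz₀ h2 h1)

/-- A boundary point of the square in `K` is not isolated in `K`. -/
lemma SqDecomp.mem_closure_diff {D₁ D₂ K : Set (ℝ × ℝ)} {a b : ℝ × ℝ}
    (h : SqDecomp D₁ D₂ K a b) {e : ℝ × ℝ} (he : e ∈ K) (hei : e ∉ interior unitSq) :
    e ∈ closure (K \ {e}) := by
  rw [Metric.mem_closure_iff]
  by_contra! ⟨r, hr, hno⟩
  obtain ⟨U, hU, hUD⟩ := h.open₁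
  obtain ⟨V, hV, hVD⟩ := h.open₂
  have hT : IsPreconnected (ball e r ∩ interior unitSq) :=
    ((convex_ball e r).inter convex_unitSq.interior).isPreconnected
  have hS : IsPreconnected ((ball e r ∩ unitSq) \ {e}) := by
    refine hT.subset_closure (fun z hz => ⟨⟨hz.1, interior_subset hz.2⟩, ?_⟩) fun z hz => ?_
    · rintro rfl
      exact hei hz.2
    · have h1 := hz.1
      rw [← closure_interior_unitSq] at h1
      exact isOpen_ball.inter_closure h1
  have hD : ∀ D : Set (ℝ × ℝ), K = closure D \ D → ∃ z ∈ D, z ∈ ball e r ∧ z ≠ e := by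
    intro D hK
    have heD := hK.subset he
    obtain ⟨z, hz, hez⟩ := Metric.mem_closure_iff.1 heD.1 r hr
    exact ⟨z, hz, mem_ball'.2 hez, fun h' => heD.2 (h' ▸ hz)⟩
  have hQ : ∀ z ∈ D₁ ∪ D₂, z ∈ unitSq := fun z hz => h.cover.superset (Or.inl hz)
  obtain ⟨p, hp, hpb, hpe⟩ := hD D₁ h.front₁
  obtain ⟨q, hq, hqb, hqe⟩ := hD D₂ h.front₂
  obtain ⟨w, ⟨⟨-, hwQ⟩, -⟩, hwU, hwV⟩ := hS U V hU hV (fun z hz => by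
      rcases h.cover.subset hz.1.2 with (h3 | h3) | h3
      · exact Or.inl (hUD.subset h3).1
      · exact Or.inr (hVD.subset h3).1
      · exact absurd (mem_ball'.1 hz.1.1) (not_lt.2 (hno z ⟨h3, hz.2⟩)))
    ⟨p, ⟨⟨hpb, hQ p (Or.inl hp)⟩, hpe⟩, (hUD.subset hp).1⟩
    ⟨q, ⟨⟨hqb, hQ q (Or.inr hq)⟩, hqe⟩, (hVD.subset hq).1⟩
  exact Set.disjoint_left.1 h.disj (hUD.superset ⟨hwU, hwQ⟩) (hVD.superset ⟨hwV, hwQ⟩)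

/-- The strict order on `K` defined by cuts. -/
def cutLt (D₁ D₂ : Set (ℝ × ℝ)) (a b y x : ℝ × ℝ) : Prop :=
  y ≠ x ∧ (y = a ∨ x = b ∨ OnSide D₁ D₂ a x y)

lemma cutLt_left_iff {D₁ D₂ : Set (ℝ × ℝ)} {a b x : ℝ × ℝ} :
    cutLt D₁ D₂ a b a x ↔ x ≠ a :=
  ⟨fun h' => h'.1.symm, fun h' => ⟨h'.symm, Or.inl rfl⟩⟩

lemma cutLt_right_iff {D₁ D₂ : Set (ℝ × ℝ)} {a b x : ℝ × ℝ} :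
    cutLt D₁ D₂ a b x b ↔ x ≠ b :=
  ⟨fun h' => h'.1, fun h' => ⟨h', Or.inr (Or.inl rfl)⟩⟩

namespace SqConfig

variable {D₁ D₂ K : Set (ℝ × ℝ)} {a b x y z : ℝ × ℝ}

lemma onSide_or (h : SqConfig D₁ D₂ K a b) (hx : x ∈ K) (hxa : x ≠ a) (hxb : x ≠ b)
    {α β : ℝ → ℝ × ℝ} (hα : IsHalfArc D₁ (1 / 2, 0) x α) (hβ : IsHalfArc D₂ (1 / 2, 1) x β)
    (hy : y ∈ K) (hyx : y ≠ x) : OnSide D₁ D₂ a x y ∨ OnSide D₁ D₂ b x y :=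
  ((hα.isCut hβ).unseparated_or h hx hxa hxb hy hyx).imp (fun h' => ⟨_, _, _, _, hα.isCut hβ, h'⟩)
    fun h' => ⟨_, _, _, _, hα.isCut hβ, h'⟩

lemma not_onSide_both (h : SqConfig D₁ D₂ K a b) (hx : x ∈ K) (hy : y ∈ K)
    (ha : OnSide D₁ D₂ a x y) (hb : OnSide D₁ D₂ b x y) : False := by
  have h1 := hb
  obtain ⟨_, _, _, _, hc, hu⟩ := h1
  exact hc.not_unseparated h hx ((ha.unseparated h hx h.a_mem hy hc).symm.trans hu)

lemma onSide_self (h : SqConfig D₁ D₂ K a b) (hx : x ∈ K) {e : ℝ × ℝ} (he : e ∈ K) (hex : e ≠ x)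
    {α β : ℝ → ℝ × ℝ} (hα : IsHalfArc D₁ (1 / 2, 0) x α) (hβ : IsHalfArc D₂ (1 / 2, 1) x β) :
    OnSide D₁ D₂ e x e :=
  ⟨_, _, _, _, hα.isCut hβ, Unseparated.of_convex (convex_singleton e)
    (by simpa using fun h' => hex ((hα.isCut hβ).eq_of_mem_cutBarrier h hx he h')) rfl rfl⟩

lemma exists_isOpen_onSide (h : SqConfig D₁ D₂ K a b) (hx : x ∈ K) {e : ℝ × ℝ} (he : e ∈ K)
    {α β : ℝ → ℝ × ℝ} (hα : IsHalfArc D₁ (1 / 2, 0) x α) (hβ : IsHalfArc D₂ (1 / 2, 1) x β) :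
    ∃ U, IsOpen U ∧ ∀ y ∈ K, OnSide D₁ D₂ e x y ↔ y ∈ U :=
  ⟨_, Unseparated.isOpen_setOf (p := e) ((hα.isCut hβ).isClosed_cutBarrier h hx), fun _ hy =>
    ⟨fun h' => (h'.unseparated h hx he hy (hα.isCut hβ)).symm,
      fun h' => ⟨_, _, _, _, hα.isCut hβ, h'.symm⟩⟩⟩

lemma not_cutLt_left (h : SqConfig D₁ D₂ K a b) : ¬ cutLt D₁ D₂ a b x a := by
  rintro ⟨h1, rfl | h2 | h2⟩
  · exact h1 rfl
  · exact h.ne h2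
  · exact h2.ne_right rfl

lemma not_cutLt_right (h : SqConfig D₁ D₂ K a b) (hx : x ∈ K) : ¬ cutLt D₁ D₂ a b b x := by
  rintro ⟨h1, h2 | h2 | h2⟩
  · exact h.ne h2.symm
  · exact h1 h2.symm
  · obtain ⟨_, _, _, _, hc, hu⟩ := h2
    exact hc.not_unseparated h hx hu.symm

lemma isCompact_K (h : SqConfig D₁ D₂ K a b) : IsCompact K :=
  (isCompact_Icc (a := ((0, 0) : ℝ × ℝ)) (b := (1, 1))).of_isClosed_subset h.isClosed_K h.K_subset

variable (harc : ∀ x ∈ K, x ≠ a → x ≠ b → (∃ α, IsHalfArc D₁ (1 / 2, 0) x α) ∧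
  ∃ β, IsHalfArc D₂ (1 / 2, 1) x β)
include harc

lemma cutLt_iff_left (h : SqConfig D₁ D₂ K a b) (hx : x ∈ K) (hxa : x ≠ a) (hxb : x ≠ b) :
    cutLt D₁ D₂ a b y x ↔ OnSide D₁ D₂ a x y := by
  obtain ⟨⟨α, hα⟩, β, hβ⟩ := harc x hx hxa hxb
  constructor
  · rintro ⟨-, rfl | h1 | h1⟩
    · exact h.onSide_self hx h.a_mem hxa.symm hα hβ
    · exact absurd h1 hxb
    · exact h1
  · exact fun h1 => ⟨h1.ne_left, Or.inr (Or.inr h1)⟩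

lemma onSide_left_of_right (h : SqConfig D₁ D₂ K a b) (hx : x ∈ K) (hxa : x ≠ a) (hxb : x ≠ b)
    (hz : z ∈ K) (hza : z ≠ a) (hzb : z ≠ b) (hzx : OnSide D₁ D₂ b x z)
    (hy : y = x ∨ y ∈ K ∧ OnSide D₁ D₂ a x y) : OnSide D₁ D₂ a z y := by
  obtain ⟨⟨α, hα⟩, β, hβ⟩ := harc x hx hxa hxb
  obtain ⟨⟨α', hα'⟩, β', hβ'⟩ := harc z hz hza hzb
  exact OnSide.of_opposite h hx h.a_mem h.b_mem hxa.symm hz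
    (fun _ _ _ _ hc => hc.not_unseparated h hx) hα hβ hα' hβ' hzx hy

lemma onSide_right_of_left (h : SqConfig D₁ D₂ K a b) (hx : x ∈ K) (hxa : x ≠ a) (hxb : x ≠ b)
    (hz : z ∈ K) (hza : z ≠ a) (hzb : z ≠ b) (hzx : OnSide D₁ D₂ a x z) :
    OnSide D₁ D₂ b z x := by
  obtain ⟨⟨α, hα⟩, β, hβ⟩ := harc x hx hxa hxb
  obtain ⟨⟨α', hα'⟩, β', hβ'⟩ := harc z hz hza hzb
  exact OnSide.of_opposite h hx h.b_mem h.a_mem hxb.symm hz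
    (fun _ _ _ _ hc hu => hc.not_unseparated h hx hu.symm) hα hβ hα' hβ' hzx (Or.inl rfl)

lemma cutLt_iff_right (h : SqConfig D₁ D₂ K a b) (hx : x ∈ K) (hxa : x ≠ a) (hxb : x ≠ b)
    (hy : y ∈ K) : cutLt D₁ D₂ a b x y ↔ OnSide D₁ D₂ b x y := by
  obtain ⟨⟨α, hα⟩, β, hβ⟩ := harc x hx hxa hxb
  by_cases hya : y = a
  · subst hya
    exact ⟨fun h' => absurd h' h.not_cutLt_left, fun h' =>
      (h.not_onSide_both hx hy (h.onSide_self hx hy hxa.symm hα hβ) h').elim⟩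
  by_cases hyb : y = b
  · subst hyb
    exact ⟨fun _ => h.onSide_self hx hy hxb.symm hα hβ, fun h' => cutLt_right_iff.2 hxb⟩
  rw [h.cutLt_iff_left harc hy hya hyb]
  exact ⟨h.onSide_right_of_left harc hy hya hyb hx hxa hxb,
    fun h' => h.onSide_left_of_right harc hx hxa hxb hy hya hyb h' (Or.inl rfl)⟩

lemma cutLt_trans (h : SqConfig D₁ D₂ K a b) (hy : y ∈ K) (hx : x ∈ K) (hz : z ∈ K)
    (hyx : cutLt D₁ D₂ a b y x) (hxz : cutLt D₁ D₂ a b x z) : cutLt D₁ D₂ a b y z := by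
  have hxa : x ≠ a := by rintro rfl; exact h.not_cutLt_left hyx
  have hza : z ≠ a := by rintro rfl; exact h.not_cutLt_left hxz
  have hxb : x ≠ b := by rintro rfl; exact h.not_cutLt_right hz hxz
  have hyb : y ≠ b := by rintro rfl; exact h.not_cutLt_right hx hyx
  by_cases hzb : z = b
  · exact ⟨fun h1 => hyb (h1.trans hzb), Or.inr (Or.inl hzb)⟩
  rw [h.cutLt_iff_left harc hx hxa hxb] at hyx
  rw [h.cutLt_iff_right harc hx hxa hxb hz] at hxz
  rw [h.cutLt_iff_left harc hz hza hzb]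
  exact h.onSide_left_of_right harc hx hxa hxb hz hza hzb hxz (Or.inr ⟨hy, hyx⟩)

lemma cutLt_or (h : SqConfig D₁ D₂ K a b) (hx : x ∈ K) (hy : y ∈ K) (hxy : x ≠ y) :
    cutLt D₁ D₂ a b x y ∨ cutLt D₁ D₂ a b y x := by
  by_cases hxa : x = a
  · exact Or.inl ⟨hxy, Or.inl hxa⟩
  by_cases hxb : x = b
  · exact Or.inr ⟨hxy.symm, Or.inr (Or.inl hxb)⟩
  rw [h.cutLt_iff_left harc hx hxa hxb, h.cutLt_iff_right harc hx hxa hxb hy]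
  obtain ⟨⟨α, hα⟩, β, hβ⟩ := harc x hx hxa hxb
  exact (h.onSide_or hx hxa hxb hα hβ hy hxy.symm).symm

lemma exists_isOpen_cutLt_left (h : SqConfig D₁ D₂ K a b) (hx : x ∈ K) :
    ∃ U, IsOpen U ∧ ∀ y ∈ K, cutLt D₁ D₂ a b y x ↔ y ∈ U := by
  by_cases hxa : x = a
  · exact ⟨∅, isOpen_empty, fun y _ => ⟨fun h' => (h.not_cutLt_left (hxa ▸ h')).elim, False.elim⟩⟩
  by_cases hxb : x = b
  · exact ⟨{b}ᶜ, isOpen_compl_singleton, fun y _ => hxb ▸ cutLt_right_iff⟩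
  obtain ⟨⟨α, hα⟩, β, hβ⟩ := harc x hx hxa hxb
  simp only [h.cutLt_iff_left harc hx hxa hxb]
  exact h.exists_isOpen_onSide hx h.a_mem hα hβ

lemma exists_isOpen_cutLt_right (h : SqConfig D₁ D₂ K a b) (hx : x ∈ K) :
    ∃ U, IsOpen U ∧ ∀ y ∈ K, cutLt D₁ D₂ a b x y ↔ y ∈ U := by
  by_cases hxb : x = b
  · exact ⟨∅, isOpen_empty, fun y hy =>
      ⟨fun h' => (h.not_cutLt_right hy (hxb ▸ h')).elim, False.elim⟩⟩
  by_cases hxa : x = a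
  · exact ⟨{a}ᶜ, isOpen_compl_singleton, fun y _ => hxa ▸ cutLt_left_iff⟩
  obtain ⟨⟨α, hα⟩, β, hβ⟩ := harc x hx hxa hxb
  obtain ⟨U, hU, hU'⟩ := h.exists_isOpen_onSide hx h.b_mem hα hβ
  exact ⟨U, hU, fun y hy => (h.cutLt_iff_right harc hx hxa hxb hy).trans (hU' y hy)⟩

lemma mem_closure_cutLt_right (h : SqConfig D₁ D₂ K a b) (hacc : a ∈ closure (K \ {a}))
    (hx : x ∈ K) (hxb : x ≠ b) : x ∈ closure {y | y ∈ K ∧ cutLt D₁ D₂ a b x y} := by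
  by_cases hxa : x = a
  · subst hxa
    have hsub : K \ {x} ⊆ {y | y ∈ K ∧ cutLt D₁ D₂ x b x y} := fun y hy =>
      ⟨hy.1, cutLt_left_iff.2 hy.2⟩
    exact closure_mono hsub hacc
  obtain ⟨⟨α, hα⟩, β, hβ⟩ := harc x hx hxa hxb
  refine Metric.mem_closure_iff.2 fun r hr => ?_
  obtain ⟨z, hzK, hz, hu⟩ := (hα.isCut hβ).exists_mem_ball_right h hx hxa hxb hr
  exact ⟨z, ⟨hzK, (h.cutLt_iff_right harc hx hxa hxb hzK).2 ⟨_, _, _, _, hα.isCut hβ, hu⟩⟩,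
    mem_ball'.1 hz⟩

lemma mem_closure_cutLt_left (h : SqConfig D₁ D₂ K a b) (hacc : b ∈ closure (K \ {b}))
    (hx : x ∈ K) (hxa : x ≠ a) : x ∈ closure {y | y ∈ K ∧ cutLt D₁ D₂ a b y x} := by
  by_cases hxb : x = b
  · subst hxb
    have hsub : K \ {x} ⊆ {y | y ∈ K ∧ cutLt D₁ D₂ a x y x} := fun y hy =>
      ⟨hy.1, cutLt_right_iff.2 hy.2⟩
    exact closure_mono hsub hacc
  obtain ⟨⟨α, hα⟩, β, hβ⟩ := harc x hx hxa hxb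
  refine Metric.mem_closure_iff.2 fun r hr => ?_
  obtain ⟨z, hzK, hz, hu⟩ := (hα.isCut hβ).exists_mem_ball_left h hx hxa hxb hr
  exact ⟨z, ⟨hzK, (h.cutLt_iff_left harc hx hxa hxb).2 ⟨_, _, _, _, hα.isCut hβ, hu⟩⟩,
    mem_ball'.1 hz⟩

lemma exists_cutLt_right (h : SqConfig D₁ D₂ K a b) (hacc : a ∈ closure (K \ {a}))
    (hx : x ∈ K) (hxb : x ≠ b) {ε : ℝ} (hε : 0 < ε) :
    ∃ y ∈ K, cutLt D₁ D₂ a b x y ∧ diam {z | z ∈ K ∧ (x = z ∨ cutLt D₁ D₂ a b x z) ∧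
      (z = y ∨ cutLt D₁ D₂ a b z y)} < ε :=
  exists_lt_diam_lt h.isCompact_K (lt := cutLt D₁ D₂ a b) (fun _ h' => h'.1 rfl)
    (fun _ hx _ hy _ hz => h.cutLt_trans harc hx hy hz) (fun _ hx _ hy => h.cutLt_or harc hx hy)
    (fun _ => h.exists_isOpen_cutLt_left harc) (fun _ => h.exists_isOpen_cutLt_right harc) hx
    (h.mem_closure_cutLt_right harc hacc hx hxb) hε

lemma exists_cutLt_left (h : SqConfig D₁ D₂ K a b) (hacc : b ∈ closure (K \ {b}))
    (hx : x ∈ K) (hxa : x ≠ a) {ε : ℝ} (hε : 0 < ε) :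
    ∃ y ∈ K, cutLt D₁ D₂ a b y x ∧ diam {z | z ∈ K ∧ (x = z ∨ cutLt D₁ D₂ a b z x) ∧
      (z = y ∨ cutLt D₁ D₂ a b y z)} < ε :=
  exists_lt_diam_lt h.isCompact_K (lt := fun x y => cutLt D₁ D₂ a b y x)
    (fun _ h' => h'.1 rfl)
    (fun _ hx _ hy _ hz hxy hyz => h.cutLt_trans harc hz hy hx hyz hxy)
    (fun _ hx _ hy hxy => (h.cutLt_or harc hx hy hxy).symm)
    (fun _ => h.exists_isOpen_cutLt_right harc) (fun _ => h.exists_isOpen_cutLt_left harc) hx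
    (h.mem_closure_cutLt_left harc hacc hx hxa) hε

end SqConfig

/-- An injective path, parametrized by some interval `[l, 1]`, which starts at `q` and stays in `T`
until it reaches `x` at time `1`. -/
def ArcTo (T : Set (ℝ × ℝ)) (q x : ℝ × ℝ) : Prop :=
  ∃ l < (1 : ℝ), ∃ γ : ℝ → ℝ × ℝ, ContinuousOn γ (Icc l 1) ∧ InjOn γ (Icc l 1) ∧ γ l = q ∧
    γ 1 = x ∧ ∀ t ∈ Ico l 1, γ t ∈ T

namespace ArcTo

variable {S T : Set (ℝ × ℝ)} {q w x : ℝ × ℝ}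

lemma mono (h : ArcTo S q x) (hST : S ⊆ T) : ArcTo T q x := by
  obtain ⟨l, hl, γ, h1, h2, h3, h4, h5⟩ := h
  exact ⟨l, hl, γ, h1, h2, h3, h4, fun t ht => hST (h5 t ht)⟩

/-- Move the origin of an arc along a segment. -/
lemma of_segment (h : ArcTo T w x) (hx : x ∉ T) (hqw : segment ℝ q w ⊆ T) : ArcTo T q x := by
  by_cases hne : q = w
  · exact hne ▸ h
  obtain ⟨l, hl, γ, hγ, hinj, hγl, hγ1, hγT⟩ := h
  have hσ : Continuous (AffineMap.lineMap q w : ℝ → ℝ × ℝ) := AffineMap.lineMap_continuous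
  have hσT : ∀ t ∈ Icc (0 : ℝ) 1, AffineMap.lineMap q w t ∈ T := fun t ht =>
    hqw (segment_eq_image_lineMap ℝ q w ▸ mem_image_of_mem _ ht)
  have hcl : IsClosed (γ '' Icc l 1) := (isCompact_Icc.image_of_continuousOn hγ).isClosed
  obtain ⟨t₀, ⟨ht₀, s₀, hs₀, hst⟩, hmin⟩ :=
    (isCompact_Icc.inter_right (hcl.preimage hσ)).exists_isLeast
      (⟨1, by simp, l, ⟨le_rfl, hl.le⟩, by simp [hγl]⟩ :
        (Icc (0 : ℝ) 1 ∩ (AffineMap.lineMap q w : ℝ → ℝ × ℝ) ⁻¹' (γ '' Icc l 1)).Nonempty)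
  have hs1 : s₀ < 1 := hs₀.2.lt_of_ne fun h1 => hx <| by
    rw [← hγ1, ← h1, hst]
    exact hσT t₀ ht₀
  set δ : ℝ → ℝ × ℝ := fun s => if s ≤ s₀ then AffineMap.lineMap q w (s - (s₀ - t₀)) else γ s with hδ
  have hδ₁ : ∀ s ≤ s₀, δ s = AffineMap.lineMap q w (s - (s₀ - t₀)) := fun s hs => if_pos hs
  have hδ₂ : ∀ s, s₀ ≤ s → δ s = γ s := fun s hs => by
    rcases hs.eq_or_lt with rfl | hs
    · rw [hδ₁ _ le_rfl, hst]
      simp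
    · exact if_neg hs.not_ge
  have hmem : ∀ s ∈ Icc (s₀ - t₀) s₀, s - (s₀ - t₀) ∈ Icc (0 : ℝ) 1 := fun s hs =>
    ⟨by linarith [hs.1], by linarith [hs.2, ht₀.2]⟩
  have hmix : ∀ u ∈ Icc (s₀ - t₀) 1, ∀ v ∈ Icc (s₀ - t₀) 1, u ≤ s₀ → s₀ < v → δ u ≠ δ v := by
    intro u hu v hv hus hsv huv
    rw [hδ₁ u hus, hδ₂ v hsv.le] at huv
    have hvl : v ∈ Icc l 1 := ⟨hs₀.1.trans hsv.le, hv.2⟩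
    have h1 : t₀ ≤ u - (s₀ - t₀) := hmin ⟨hmem u ⟨hu.1, hus⟩, v, hvl, huv.symm⟩
    have h2 : u - (s₀ - t₀) = t₀ := by linarith
    rw [h2, ← hst] at huv
    exact hsv.ne (hinj hs₀ hvl huv)
  refine ⟨s₀ - t₀, by linarith [ht₀.1], δ, ?_, ?_, ?_, ?_, ?_⟩
  · rw [← Icc_union_Icc_eq_Icc (show s₀ - t₀ ≤ s₀ by linarith [ht₀.1]) hs1.le]
    refine ContinuousOn.union_of_isClosed ?_ ?_ isClosed_Icc isClosed_Icc
    · exact (hσ.comp (continuous_id.sub continuous_const)).continuousOn.congr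
        fun s hs => hδ₁ s hs.2
    · exact (hγ.mono (Icc_subset_Icc_left hs₀.1)).congr fun s hs => hδ₂ s hs.1
  · intro u hu v hv huv
    rcases le_or_gt u s₀ with h1 | h1 <;> rcases le_or_gt v s₀ with h2 | h2
    · rw [hδ₁ u h1, hδ₁ v h2] at huv
      linarith [AffineMap.lineMap_injective ℝ hne huv]
    · exact (hmix u hu v hv h1 h2 huv).elim
    · exact (hmix v hv u hu h2 h1 huv.symm).elim
    · rw [hδ₂ u h1.le, hδ₂ v h2.le] at huv
      exact hinj ⟨hs₀.1.trans h1.le, hu.2⟩ ⟨hs₀.1.trans h2.le, hv.2⟩ huv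
  · rw [hδ₁ _ (by linarith [ht₀.1])]
    simp
  · rw [hδ₂ 1 hs1.le, hγ1]
  · intro s hs
    rcases le_or_gt s s₀ with h1 | h1
    · rw [hδ₁ s h1]
      exact hσT _ (hmem s ⟨hs.1, h1⟩)
    · rw [hδ₂ s h1.le]
      exact hγT s ⟨hs₀.1.trans h1.le, hs.2⟩

/-- The final part of an arc witnessing accessibility. -/
lemma of_accessible {D : Set (ℝ × ℝ)} (h : Accessible D x) (hT : T ∈ 𝓝 x) :
    ∃ q ∈ D ∩ T, ArcTo (D ∩ T) q x := by
  obtain ⟨φ, hφ, hinj, -, hD, rfl⟩ := h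
  have hev : ∀ᶠ t : ℝ in 𝓝 1, φ (projIcc 0 1 zero_le_one t) ∈ T := by
    refine (hφ.comp continuous_projIcc).continuousAt.eventually_mem ?_
    rwa [Function.comp_apply, projIcc_right]
  obtain ⟨r, hr, hrT⟩ := Metric.eventually_nhds_iff.1 hev
  have hl : max 0 (1 - r / 2) < 1 := max_lt one_pos (by linarith)
  have hmem : ∀ t ∈ Ico (max 0 (1 - r / 2)) 1, φ (projIcc 0 1 zero_le_one t) ∈ D ∩ T := by
    intro t ht
    have h0 : 0 ≤ t := (le_max_left _ _).trans ht.1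
    have h1 : 1 - r / 2 ≤ t := (le_max_right _ _).trans ht.1
    refine ⟨hD _ ?_, hrT ?_⟩
    · rw [projIcc_of_mem zero_le_one ⟨h0, ht.2.le⟩]
      exact ht.2
    · rw [Real.dist_eq, abs_lt]
      constructor <;> linarith [ht.2]
  refine ⟨_, hmem _ ⟨le_rfl, hl⟩, _, hl, fun t => φ (projIcc 0 1 zero_le_one t),
    (hφ.comp continuous_projIcc).continuousOn, fun u hu v hv huv => ?_, rfl, ?_, hmem⟩
  · exact (strictMonoOn_projIcc (zero_le_one (α := ℝ))).injOn ⟨(le_max_left _ _).trans hu.1, hu.2⟩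
      ⟨(le_max_left _ _).trans hv.1, hv.2⟩ (hinj huv)
  · exact congrArg φ (projIcc_right zero_le_one)

/-- Rescale the parameter interval to `[0, 1]`. -/
lemma exists_param (h : ArcTo T q x) : ∃ γ : ℝ → ℝ × ℝ, ContinuousOn γ (Icc 0 1) ∧
    InjOn γ (Icc 0 1) ∧ γ 0 = q ∧ γ 1 = x ∧ ∀ t ∈ Ico (0 : ℝ) 1, γ t ∈ T := by
  obtain ⟨l, hl, γ, hγ, hinj, hγl, hγ1, hγT⟩ := h
  have hmaps : MapsTo (fun t : ℝ => l + t * (1 - l)) (Icc 0 1) (Icc l 1) := fun t ht =>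
    ⟨by nlinarith [ht.1], by nlinarith [ht.2]⟩
  refine ⟨fun t => γ (l + t * (1 - l)), hγ.comp (by fun_prop) hmaps, ?_, by simpa, by simpa, ?_⟩
  · intro u hu v hv huv
    have h1 := hinj (hmaps hu) (hmaps hv) huv
    exact mul_right_cancel₀ (by linarith : 1 - l ≠ 0) (by linarith : u * (1 - l) = v * (1 - l))
  · exact fun t ht => hγT _ ⟨by nlinarith [ht.1], by nlinarith [ht.2]⟩

lemma of_isPreconnected {D U : Set (ℝ × ℝ)} (hD : IsPreconnected D) (hU : IsOpen U)
    (hDU : D = U ∩ unitSq) (hx : x ∉ D) {p : ℝ × ℝ} (hp : p ∈ D ∩ interior unitSq)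
    (h : ArcTo (D ∩ interior unitSq) p x) (hq : q ∈ D ∩ interior unitSq) :
    ArcTo (D ∩ interior unitSq) q x := by
  set T := D ∩ interior unitSq with hT
  have hTU : ∀ z ∈ U, z ∈ interior unitSq → z ∈ T := fun z hz hz' =>
    ⟨hDU.superset ⟨hz, interior_subset hz'⟩, hz'⟩
  by_contra hno
  have hlocal : ∀ z ∈ D, ∀ᶠ v in 𝓝 z, ∀ᶠ w in 𝓝 z, v ∈ T → w ∈ T → ArcTo T v x → ArcTo T w x := by
    intro z hz
    obtain ⟨r, hr, hrU⟩ := Metric.isOpen_iff.1 hU z (hDU.subset hz).1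
    filter_upwards [ball_mem_nhds z hr] with v hv
    filter_upwards [ball_mem_nhds z hr] with w hw hvT hwT hvx
    refine hvx.of_segment (fun h' => hx h'.1) fun y hy => ?_
    have h1 := ((convex_ball z r).inter convex_unitSq.interior).segment_subset
      ⟨hw, hwT.2⟩ ⟨hv, hvT.2⟩ hy
    exact hTU y (hrU h1.1) h1.2
  obtain ⟨z, hzD, hzu, hzv⟩ := hD {z | ∀ᶠ w in 𝓝 z, w ∈ T → ArcTo T w x}
    {z | ∀ᶠ w in 𝓝 z, w ∈ T → ¬ ArcTo T w x} isOpen_setOfPred_eventually_nhds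
    isOpen_setOfPred_eventually_nhds (fun z hz => by
      by_cases hz' : ∃ᶠ v in 𝓝 z, v ∈ T ∧ ArcTo T v x
      · obtain ⟨v, hv, hv'⟩ := (hz'.and_eventually (hlocal z hz)).exists
        exact Or.inl (hv'.mono fun w hw hwT => hw hv.1 hwT hv.2)
      · exact Or.inr ((not_frequently.1 hz').mono fun w hw hwT h' => hw ⟨hwT, h'⟩))
    ⟨p, hp.1, ((hlocal p hp.1).self_of_nhds).mono fun w hw hwT => hw hp hwT h⟩
    ⟨q, hq.1, (hlocal q hq.1).mono fun v hv hvT hvx => hno (hv.self_of_nhds hvT hq hvx)⟩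
  have hzQ : z ∈ closure (interior unitSq) := closure_interior_unitSq.superset (hDU.subset hzD).2
  obtain ⟨w, hw, h1, h2, h3⟩ := ((mem_closure_iff_frequently.1 hzQ).and_eventually
    (hzu.and (hzv.and (hU.mem_nhds (hDU.subset hzD).1)))).exists
  exact h2 (hTU w h3 hw) (h1 (hTU w h3 hw))

/-- An accessible interior point can be joined to a given point of the square. -/
lemma exists_of_accessible {D U : Set (ℝ × ℝ)} (hD : IsPreconnected D) (hU : IsOpen U)
    (hDU : D = U ∩ unitSq) (hx : x ∉ D) (hxi : x ∈ interior unitSq) (hacc : Accessible D x)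
    {e : ℝ × ℝ} (he : e ∈ D) : ArcTo (D ∩ (interior unitSq ∪ {e})) e x := by
  obtain ⟨p, hp, hpx⟩ := of_accessible hacc (isOpen_interior.mem_nhds hxi)
  obtain ⟨r, hr, hrU⟩ := Metric.isOpen_iff.1 hU e (hDU.subset he).1
  have heQ : e ∈ closure (interior unitSq) := closure_interior_unitSq.superset (hDU.subset he).2
  obtain ⟨w, hw, hew⟩ := Metric.mem_closure_iff.1 heQ r hr
  have hwr := mem_ball'.2 hew
  have hwD : w ∈ D := hDU.superset ⟨hrU hwr, interior_subset hw⟩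
  refine ((of_isPreconnected hD hU hDU hx hp hpx ⟨hwD, hw⟩).mono
    (inter_subset_inter_right D subset_union_left)).of_segment (fun h' => hx h'.1) ?_
  intro z hz
  have hzr := (convex_ball e r).segment_subset (mem_ball_self hr) hwr hz
  have hzQ := convex_unitSq.segment_subset (hDU.subset he).2 (interior_subset hw) hz
  refine ⟨hDU.superset ⟨hrU hzr, hzQ⟩, ?_⟩
  rw [← insert_endpoints_openSegment] at hz
  rcases hz with rfl | rfl | hz
  · exact Or.inr rfl
  · exact Or.inl hw
  · exact Or.inl (convex_unitSq.openSegment_closure_interior_subset_interior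
      (subset_closure (hDU.subset he).2) hw hz)

end ArcTo

/-- Two injective half arcs which meet only in their end point form a crosscut. -/
lemma exists_isCrosscut {D₁ D₂ : Set (ℝ × ℝ)} {x : ℝ × ℝ} (hd : Disjoint D₁ D₂)
    (hx₂ : x ∉ D₂) (hxi : x ∈ interior unitSq)
    (h₁ : ArcTo (D₁ ∩ (interior unitSq ∪ {(1 / 2, 0)})) (1 / 2, 0) x)
    (h₂ : ArcTo (D₂ ∩ (interior unitSq ∪ {(1 / 2, 1)})) (1 / 2, 1) x) :
    ∃ φ, IsCrosscut D₁ D₂ x φ := by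
  obtain ⟨α, hα, hαi, hα0, hα1, hαT⟩ := h₁.exists_param
  obtain ⟨β, hβ, hβi, hβ0, hβ1, hβT⟩ := h₂.exists_param
  set φ : unitInterval → ℝ × ℝ := fun t =>
    if (t : ℝ) ≤ 1 / 2 then α (2 * t) else β (2 - 2 * t) with hφ
  have hφα : ∀ t : unitInterval, (t : ℝ) ≤ 1 / 2 → φ t = α (2 * t) := fun t ht => if_pos ht
  have hφβ : ∀ t : unitInterval, 1 / 2 ≤ (t : ℝ) → φ t = β (2 - 2 * t) := fun t ht => by
    rcases ht.eq_or_lt with ht | ht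
    · rw [hφα t ht.ge, ← ht]
      norm_num [hα1, hβ1]
    · exact if_neg ht.not_ge
  have hmα : ∀ t : unitInterval, (t : ℝ) ≤ 1 / 2 → 2 * (t : ℝ) ∈ Icc (0 : ℝ) 1 := fun t ht =>
    ⟨by linarith [t.2.1], by linarith⟩
  have hmβ : ∀ t : unitInterval, 1 / 2 ≤ (t : ℝ) → 2 - 2 * (t : ℝ) ∈ Icc (0 : ℝ) 1 := fun t ht =>
    ⟨by linarith [t.2.2], by linarith⟩
  have hlow : ∀ t : unitInterval, (t : ℝ) < 1 / 2 →
      φ t ∈ D₁ ∩ (interior unitSq ∪ {(1 / 2, 0)}) := fun t ht => by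
    rw [hφα t ht.le]
    exact hαT _ ⟨by linarith [t.2.1], by linarith⟩
  have hup : ∀ t : unitInterval, 1 / 2 < (t : ℝ) →
      φ t ∈ D₂ ∩ (interior unitSq ∪ {(1 / 2, 1)}) := fun t ht => by
    rw [hφβ t ht.le]
    exact hβT _ ⟨by linarith [t.2.2], by linarith⟩
  have hhalf : ∀ t : unitInterval, (t : ℝ) = 1 / 2 → φ t = x := fun t ht => by
    rw [hφα t ht.le, ht]
    norm_num [hα1]
  have hmix : ∀ s t : unitInterval, (s : ℝ) ≤ 1 / 2 → 1 / 2 < (t : ℝ) → φ s ≠ φ t := by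
    intro s t hs ht hst
    have h1 := (hup t ht).1
    rw [← hst] at h1
    rcases hs.eq_or_lt with hs | hs
    · exact hx₂ (hhalf s hs ▸ h1)
    · exact Set.disjoint_left.1 hd (hlow s hs).1 h1
  have hinj : Function.Injective φ := by
    intro s t hst
    rcases le_or_gt (s : ℝ) (1 / 2) with hs | hs <;> rcases le_or_gt (t : ℝ) (1 / 2) with ht | ht
    · rw [hφα s hs, hφα t ht] at hst
      exact Subtype.ext (by linarith [hαi (hmα s hs) (hmα t ht) hst])
    · exact (hmix s t hs ht hst).elim
    · exact (hmix t s ht hs hst.symm).elim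
    · rw [hφβ s hs.le, hφβ t ht.le] at hst
      exact Subtype.ext (by linarith [hβi (hmβ s hs.le) (hmβ t ht.le) hst])
  have h0 : φ 0 = (1 / 2, 0) := by
    rw [hφα 0 (by norm_num)]
    norm_num [hα0]
  have h1 : φ 1 = (1 / 2, 1) := by
    rw [hφβ 1 (by norm_num)]
    norm_num [hβ0]
  refine ⟨φ, ?_, hinj, ?_, ?_, hhalf half rfl, ?_, fun t ht => (hlow t ht).1,
    fun t ht => (hup t ht).1⟩
  · rw [← continuousOn_univ]
    have hu : (univ : Set unitInterval) =
        {t : unitInterval | (t : ℝ) ≤ 1 / 2} ∪ {t : unitInterval | 1 / 2 ≤ (t : ℝ)} :=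
      (eq_univ_of_forall fun t : unitInterval => le_total (t : ℝ) (1 / 2)).symm
    rw [hu]
    refine ContinuousOn.union_of_isClosed ?_ ?_
      (isClosed_le continuous_subtype_val continuous_const)
      (isClosed_le continuous_const continuous_subtype_val)
    · exact (hα.comp (by fun_prop) hmα).congr hφα
    · exact (hβ.comp (by fun_prop) hmβ).congr hφβ
  · rw [h0]
    exact ⟨by norm_num, rfl⟩
  · rw [h1]
    exact ⟨by norm_num, rfl⟩
  · intro t ht0 ht1
    rcases lt_trichotomy (t : ℝ) (1 / 2) with ht | ht | ht
    · refine (hlow t ht).2.resolve_right fun h' => ht0.ne ?_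
      rw [mem_singleton_iff, ← h0] at h'
      exact congrArg Subtype.val (hinj h').symm
    · exact hhalf t ht ▸ hxi
    · refine (hup t ht).2.resolve_right fun h' => ht1.ne ?_
      rw [mem_singleton_iff, ← h1] at h'
      exact congrArg Subtype.val (hinj h')

lemma clamp_eq_self {u : ℝ} (h : max 0 (min 1 u) ∈ Ioo (0 : ℝ) 1) : max 0 (min 1 u) = u := by
  obtain ⟨h1, h2⟩ := h
  have h3 : 0 < u := by simpa using h1
  have h4 : u < 1 := by simpa using h2
  rw [min_eq_right h4.le, max_eq_right h3.le]

lemma le_zero_of_clamp_eq {u : ℝ} (h : max 0 (min 1 u) = 0) : u ≤ 0 := by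
  by_contra! h1
  exact ((lt_min one_pos h1).trans_le (le_max_right 0 _)).ne' h

lemma one_le_of_clamp_eq {u : ℝ} (h : max 0 (min 1 u) = 1) : 1 ≤ u := by
  by_contra! h1
  exact (max_lt one_pos ((min_le_right 1 u).trans_lt h1)).ne h

namespace IsCrosscut

variable {D₁ D₂ K : Set (ℝ × ℝ)} {a b x y : ℝ × ℝ} {φ : unitInterval → ℝ × ℝ}

lemma isCut (hφ : IsCrosscut D₁ D₂ x φ) :
    IsCut D₁ D₂ x (φ 0).1 (φ 1).1 (φ '' Icc 0 half) (φ '' Icc half 1) := by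
  obtain ⟨hc, -, h0, h1, hx, -, hD₁, hD₂⟩ := hφ
  have h0h : (0 : unitInterval) ≤ half := half.2.1
  have hh1 : half ≤ (1 : unitInterval) := half.2.2
  refine ⟨h0.1, h1.1, (isCompact_Icc.image hc).isClosed, (isCompact_Icc.image hc).isClosed,
    isPreconnected_Icc.image _ hc.continuousOn, isPreconnected_Icc.image _ hc.continuousOn,
    ⟨half, ⟨h0h, le_rfl⟩, hx⟩, ⟨half, ⟨le_rfl, hh1⟩, hx⟩,
    ⟨0, ⟨le_rfl, h0h⟩, Prod.ext rfl h0.2⟩, ⟨1, ⟨hh1, le_rfl⟩, Prod.ext rfl h1.2⟩, ?_, ?_⟩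
  · rintro _ ⟨t, ht, rfl⟩
    rcases ht.2.eq_or_lt with rfl | ht'
    · exact Or.inr hx
    · exact Or.inl (hD₁ t ht')
  · rintro _ ⟨t, ht, rfl⟩
    rcases ht.1.eq_or_lt with rfl | ht'
    · exact Or.inr hx
    · exact Or.inl (hD₂ t ht')

lemma range_subset (hφ : IsCrosscut D₁ D₂ x φ) : range φ ⊆ D₁ ∪ D₂ ∪ {x} := by
  rintro _ ⟨t, rfl⟩
  obtain ⟨-, -, -, -, hx, -, hD₁, hD₂⟩ := hφ
  rcases lt_trichotomy t half with ht | rfl | ht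
  · exact Or.inl (Or.inl (hD₁ t ht))
  · exact Or.inr hx
  · exact Or.inl (Or.inr (hD₂ t ht))

lemma cases_apply (hφ : IsCrosscut D₁ D₂ x φ) (t : unitInterval) :
    φ t = φ 0 ∨ φ t = φ 1 ∨ φ t ∈ interior unitSq := by
  obtain ⟨-, -, -, -, -, hi, -, -⟩ := hφ
  rcases t.2.1.eq_or_lt with h0 | h0
  · exact Or.inl (congrArg φ (Subtype.ext h0.symm))
  · rcases t.2.2.eq_or_lt with h1 | h1
    · exact Or.inr (Or.inl (congrArg φ (Subtype.ext h1)))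
    · exact Or.inr (Or.inr (hi t h0 h1))

lemma leftEdge_subset (hφ : IsCrosscut D₁ D₂ x φ) : leftEdge ⊆ unitSq \ range φ := by
  rintro z ⟨hz1, hz2⟩
  refine ⟨mem_unitSq.2 ⟨by simp [hz1], hz2.1.le, hz2.2.le⟩, ?_⟩
  rintro ⟨t, rfl⟩
  rcases hφ.cases_apply t with h | h | h
  · rw [h] at hz1
    exact hφ.2.2.1.1.1.ne' hz1
  · rw [h] at hz1
    exact hφ.2.2.2.1.1.1.ne' hz1
  · exact (mem_interior_unitSq.1 h).1.1.ne' hz1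

lemma leftEdge_subset_component (hφ : IsCrosscut D₁ D₂ x φ) :
    leftEdge ⊆ connectedComponentIn (unitSq \ range φ) (0, 1 / 2) := by
  have hpre : IsPreconnected leftEdge :=
    (isPreconnected_singleton (x := (0 : ℝ))).prod (isPreconnected_Ioo (a := (0 : ℝ)) (b := 1))
  exact hpre.subset_connectedComponentIn ⟨rfl, by norm_num⟩ hφ.leftEdge_subset

lemma cutBarrier_inter_subset (hφ : IsCrosscut D₁ D₂ x φ) :
    cutBarrier (φ 0).1 (φ 1).1 (φ '' Icc 0 half) (φ '' Icc half 1) ∩ unitSq ⊆ range φ := by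
  rintro z ⟨hz, hzQ⟩
  have hQ := mem_unitSq.1 hzQ
  rcases mem_cutBarrier.1 hz with h | h | h | h | h
  · exact (Set.disjoint_left.1 disjoint_unitSq_outerFrame hzQ h).elim
  · rw [mem_botTail] at h
    exact ⟨0, Prod.ext h.1.symm (hφ.2.2.1.2.trans (hQ.2.1.antisymm h.2.2))⟩
  · rw [mem_topTail] at h
    exact ⟨1, Prod.ext h.1.symm (hφ.2.2.2.1.2.trans (h.2.1.antisymm hQ.2.2))⟩
  · exact image_subset_range _ _ h
  · exact image_subset_range _ _ h

lemma unseparated_of_mem_H₁ (hφ : IsCrosscut D₁ D₂ x φ) (ha : a ∈ leftEdge) (hy : y ∈ H₁ φ)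
    (hyr : y ∉ range φ) :
    Unseparated (cutBarrier (φ 0).1 (φ 1).1 (φ '' Icc 0 half) (φ '' Icc half 1)) y a := by
  set C := connectedComponentIn (unitSq \ range φ) ((0 : ℝ), (1 / 2 : ℝ)) with hC
  have hCF : C ⊆ unitSq \ range φ := connectedComponentIn_subset _ _
  have hyQ : y ∈ unitSq := closure_minimal (hCF.trans sdiff_subset) isClosed_unitSq hy
  refine ⟨insert y C, isPreconnected_connectedComponentIn.subset_closure (subset_insert y C)
    (insert_subset hy subset_closure), Set.disjoint_left.2 fun z hz hzE => ?_, mem_insert y C,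
    mem_insert_of_mem y (hφ.leftEdge_subset_component ha)⟩
  have hzF : z ∈ unitSq \ range φ := by
    rcases hz with rfl | hz
    exacts [⟨hyQ, hyr⟩, hCF hz]
  exact hzF.2 (hφ.cutBarrier_inter_subset ⟨hzE, hzF.1⟩)

lemma mem_H₁_of_unseparated (hφ : IsCrosscut D₁ D₂ x φ) (ha : a ∈ leftEdge) (hy : y ∈ unitSq)
    (hu : Unseparated (cutBarrier (φ 0).1 (φ 1).1 (φ '' Icc 0 half) (φ '' Icc half 1)) y a) :
    y ∈ H₁ φ := by
  have haQ := (hφ.leftEdge_subset ha).1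
  obtain ⟨S, hS, hSE, hyS, haS⟩ := hu
  have hSF : clampSq '' S ⊆ unitSq \ range φ := by
    rintro _ ⟨z, hz, rfl⟩
    refine ⟨clampSq_mem z, ?_⟩
    rintro ⟨t, ht⟩
    have hzE := Set.disjoint_left.1 hSE hz
    have hzO := mem_outerSq.1 (Unseparated.mem_outerSq outerFrame_subset_cutBarrier
      (unitSq_subset_outerSq haQ) ⟨S, hS, hSE, haS, hz⟩)
    rcases hφ.cases_apply t with h | h | h
    · have h1 := hφ.2.2.1
      rw [← h, ht] at h1
      have h2 : z ∈ botTail (φ 0).1 := by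
        rw [← h, ht, mem_botTail]
        obtain ⟨⟨h2, h3⟩, h4⟩ := h1
        exact ⟨(clamp_eq_self ⟨h2, h3⟩).symm, hzO.2.1.le, le_zero_of_clamp_eq h4⟩
      exact hzE (mem_cutBarrier.2 (Or.inr (Or.inl h2)))
    · have h1 := hφ.2.2.2.1
      rw [← h, ht] at h1
      have h2 : z ∈ topTail (φ 1).1 := by
        rw [← h, ht, mem_topTail]
        obtain ⟨⟨h2, h3⟩, h4⟩ := h1
        exact ⟨(clamp_eq_self ⟨h2, h3⟩).symm, one_le_of_clamp_eq h4, hzO.2.2.le⟩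
      exact hzE (mem_cutBarrier.2 (Or.inr (Or.inr (Or.inl h2))))
    · rw [ht] at h
      have hzQ := clampSq_mem_unitSq_of_interior h
      rw [clampSq_of_mem hzQ] at ht
      rcases le_total t half with h1 | h1
      · exact hzE (mem_cutBarrier.2 (Or.inr (Or.inr (Or.inr (Or.inl
          ⟨t, ⟨t.2.1, h1⟩, ht⟩)))))
      · exact hzE (mem_cutBarrier.2 (Or.inr (Or.inr (Or.inr (Or.inr
          ⟨t, ⟨h1, t.2.2⟩, ht⟩)))))
  refine subset_closure ?_
  rw [connectedComponentIn_eq (hφ.leftEdge_subset_component ha)]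
  exact (hS.image _ continuous_clampSq.continuousOn).subset_connectedComponentIn
    ⟨a, haS, clampSq_of_mem haQ⟩ hSF ⟨y, hyS, clampSq_of_mem hy⟩

end IsCrosscut

lemma cutLt_of_kle {D₁ D₂ K : Set (ℝ × ℝ)} {a b x y : ℝ × ℝ} (h : SqConfig D₁ D₂ K a b)
    (hy : y ∈ K) (hyx : kle D₁ D₂ a b y x) : y = x ∨ cutLt D₁ D₂ a b y x := by
  by_cases hne : y = x
  · exact Or.inl hne
  refine Or.inr ⟨hne, hyx.imp_right (Or.imp_right ?_)⟩
  rintro ⟨φ, hφ, hyφ⟩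
  refine ⟨_, _, _, _, hφ.isCut, hφ.unseparated_of_mem_H₁ h.ha hyφ fun hyr => ?_⟩
  rcases hφ.range_subset hyr with (h1 | h1) | h1
  exacts [h.notMem₁ hy h1, h.notMem₂ hy h1, hne h1]

lemma kle_of_cutLt {D₁ D₂ K : Set (ℝ × ℝ)} {a b x y : ℝ × ℝ} (h : SqConfig D₁ D₂ K a b)
    (hcross : ∀ x ∈ K, x ≠ a → x ≠ b → ∃ φ, IsCrosscut D₁ D₂ x φ) (hx : x ∈ K) (hy : y ∈ K)
    (hyx : cutLt D₁ D₂ a b y x) : kle D₁ D₂ a b y x := by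
  by_cases hxb : x = b
  · exact Or.inr (Or.inl hxb)
  refine hyx.2.imp_right (Or.imp_right fun hs => ?_)
  obtain ⟨φ, hφ⟩ := hcross x hx hs.ne_right.symm hxb
  exact ⟨φ, hφ, hφ.mem_H₁_of_unseparated h.ha (h.K_subset hy)
    (hs.unseparated h hx h.a_mem hy hφ.isCut)⟩

lemma kle_iff_of_not_isCrosscut {D₁ D₂ : Set (ℝ × ℝ)} (hno : ∀ x φ, ¬ IsCrosscut D₁ D₂ x φ)
    {a b x y : ℝ × ℝ} : kle D₁ D₂ a b y x ↔ y = a ∨ x = b := by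
  simp [kle, hno]

namespace SqDecomp

variable {D₁ D₂ K S : Set (ℝ × ℝ)} {a b : ℝ × ℝ}

lemma subset_or_subset (h : SqDecomp D₁ D₂ K a b) (hS : IsPreconnected S) (hSQ : S ⊆ unitSq)
    (hSK : ∀ z ∈ S, z ∉ K) : S ⊆ D₁ ∨ S ⊆ D₂ := by
  obtain ⟨U, hU, hUD⟩ := h.open₁
  obtain ⟨V, hV, hVD⟩ := h.open₂
  refine (isPreconnected_iff_subset_of_disjoint.1 hS U V hU hV (fun z hz => ?_) ?_).imp
    (fun h1 z hz => hUD.superset ⟨h1 hz, hSQ hz⟩) fun h1 z hz => hVD.superset ⟨h1 hz, hSQ hz⟩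
  · rcases h.cover.subset (hSQ hz) with (h1 | h1) | h1
    · exact Or.inl (hUD.subset h1).1
    · exact Or.inr (hVD.subset h1).1
    · exact (hSK z hz h1).elim
  · refine eq_empty_of_forall_notMem fun z hz => Set.disjoint_left.1 h.disj
      (hUD.superset ⟨hz.2.1, hSQ hz.1⟩) (hVD.superset ⟨hz.2.2, hSQ hz.1⟩)

lemma side_subset (h : SqDecomp D₁ D₂ K a b) {v : ℝ} (hv : v = 0 ∨ v = 1) :
    Icc (0 : ℝ) 1 ×ˢ {v} ⊆ D₁ ∨ Icc (0 : ℝ) 1 ×ˢ {v} ⊆ D₂ := by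
  have hQ : Icc (0 : ℝ) 1 ×ˢ {v} ⊆ unitSq := by
    rintro z ⟨hz1, rfl⟩
    refine mem_unitSq.2 ⟨hz1, ?_⟩
    rcases hv with hv | hv <;> rw [hv] <;> norm_num
  refine h.subset_or_subset (isPreconnected_Icc.prod isPreconnected_singleton) hQ fun z hz hzK => ?_
  have hzf : z ∈ frontier unitSq := by
    refine isClosed_unitSq.frontier_eq.superset ⟨hQ hz, fun hzi => ?_⟩
    have h1 := (mem_interior_unitSq.1 hzi).2
    rw [mem_singleton_iff.1 hz.2] at h1
    rcases hv with rfl | rfl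
    exacts [h1.1.false, h1.2.false]
  have hz2 : z.2 ∈ Ioo (0 : ℝ) 1 := by
    rcases h.bdry.subset ⟨hzK, hzf⟩ with rfl | rfl
    exacts [h.ha.2, h.hb.2]
  rw [mem_singleton_iff.1 hz.2] at hz2
  rcases hv with rfl | rfl
  exacts [hz2.1.false, hz2.2.false]

/-- If a crosscut exists, the bottom side lies in `D₁` and the top side in `D₂`. -/
lemma sqConfig (h : SqDecomp D₁ D₂ K a b) {x : ℝ × ℝ} {φ : unitInterval → ℝ × ℝ}
    (hφ : IsCrosscut D₁ D₂ x φ) : SqConfig D₁ D₂ K a b where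
  cover := h.cover
  disj := h.disj
  open₁ := h.open₁
  open₂ := h.open₂
  conn₁ := h.pconn₁.isConnected.isPreconnected
  conn₂ := h.pconn₂.isConnected.isPreconnected
  front₁ := h.front₁
  front₂ := h.front₂
  bdry := h.bdry
  ha := h.ha
  hb := h.hb
  bot u hu := by
    obtain ⟨-, -, h0, -, -, -, hD, -⟩ := hφ
    refine (h.side_subset (Or.inl rfl)).elim (fun h1 => h1 ⟨hu, rfl⟩) fun h1 => ?_
    exact (Set.disjoint_left.1 h.disj (hD 0 (by norm_num))
      (h1 ⟨Ioo_subset_Icc_self h0.1, h0.2⟩)).elim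
  top u hu := by
    obtain ⟨-, -, -, h0, -, -, -, hD⟩ := hφ
    refine (h.side_subset (Or.inr rfl)).elim (fun h1 => ?_) fun h1 => h1 ⟨hu, rfl⟩
    exact (Set.disjoint_left.1 h.disj (h1 ⟨Ioo_subset_Icc_self h0.1, h0.2⟩)
      (hD 1 (by norm_num))).elim

lemma arcTo (h : SqDecomp D₁ D₂ K a b) (hc : SqConfig D₁ D₂ K a b) {x : ℝ × ℝ} (hx : x ∈ K)
    (hxa : x ≠ a) (hxb : x ≠ b) :
    ArcTo (D₁ ∩ (interior unitSq ∪ {(1 / 2, 0)})) (1 / 2, 0) x ∧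
      ArcTo (D₂ ∩ (interior unitSq ∪ {(1 / 2, 1)})) (1 / 2, 1) x := by
  obtain ⟨U, hU, hUD⟩ := h.open₁
  obtain ⟨V, hV, hVD⟩ := h.open₂
  have hxi := hc.mem_interior hx hxa hxb
  exact ⟨ArcTo.exists_of_accessible hc.conn₁ hU hUD (hc.notMem₁ hx) hxi (h.acc₁ x hx)
    (hc.bot _ (by norm_num)), ArcTo.exists_of_accessible hc.conn₂ hV hVD (hc.notMem₂ hx) hxi
    (h.acc₂ x hx) (hc.top _ (by norm_num))⟩

lemma left_mem_closure (h : SqDecomp D₁ D₂ K a b) : a ∈ closure (K \ {a}) :=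
  h.mem_closure_diff (h.bdry.superset (mem_insert a {b})).1 fun h' =>
    (mem_interior_unitSq.1 h').1.1.ne' h.ha.1

lemma right_mem_closure (h : SqDecomp D₁ D₂ K a b) : b ∈ closure (K \ {b}) :=
  h.mem_closure_diff (h.bdry.superset (mem_insert_of_mem a rfl)).1 fun h' =>
    (mem_interior_unitSq.1 h').1.2.ne h.hb.1

lemma exists_ne (h : SqDecomp D₁ D₂ K a b) : ∃ z ∈ K, z ≠ a ∧ z ≠ b := by
  have hab : a ≠ b := by
    rintro rfl
    linarith [h.ha.1, h.hb.1]
  obtain ⟨z, hz, hzd⟩ := Metric.mem_closure_iff.1 h.left_mem_closure _ (dist_pos.2 hab)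
  exact ⟨z, hz.1, hz.2, fun hzb => hzd.ne (hzb ▸ rfl)⟩

end SqDecomp

lemma ArcTo.exists_isHalfArc {D s : Set (ℝ × ℝ)} {q x : ℝ × ℝ} (h : ArcTo (D ∩ s) q x) :
    ∃ γ, IsHalfArc D q x γ := by
  obtain ⟨γ, hγ, -, h0, h1, hm⟩ := h.exists_param
  exact ⟨γ, hγ, h0, h1, fun t ht => (hm t ht).1⟩

/-- The crosscut order on `K` has no gaps: arbitrarily close (in the order-interval-diameter
metric `ρ_K`) strictly larger elements exist below `b`, and strictly smaller elements exist
above `a`. -/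
theorem no_gaps (D₁ D₂ K : Set (ℝ × ℝ)) (a b : ℝ × ℝ)
    (hdec : SqDecomp D₁ D₂ K a b) :
    (∀ z₀ ∈ K, z₀ ≠ b → ∀ ε > (0 : ℝ), ∃ z₁ ∈ K, kle D₁ D₂ a b z₀ z₁ ∧ z₀ ≠ z₁ ∧
      Metric.diam {z ∈ K | kle D₁ D₂ a b z₀ z ∧ kle D₁ D₂ a b z z₁} < ε) ∧
    (∀ z₀ ∈ K, z₀ ≠ a → ∀ ε > (0 : ℝ), ∃ z₂ ∈ K, kle D₁ D₂ a b z₂ z₀ ∧ z₂ ≠ z₀ ∧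
      Metric.diam {z ∈ K | kle D₁ D₂ a b z₂ z ∧ kle D₁ D₂ a b z z₀} < ε) := by
  have ha := (hdec.bdry.superset (mem_insert a {b})).1
  have hb := (hdec.bdry.superset (mem_insert_of_mem a rfl)).1
  by_cases hφ : ∃ x φ, IsCrosscut D₁ D₂ x φ
  · obtain ⟨x₀, φ₀, hφ₀⟩ := hφ
    have hc := hdec.sqConfig hφ₀
    have hcross : ∀ x ∈ K, x ≠ a → x ≠ b → ∃ φ, IsCrosscut D₁ D₂ x φ := fun x hx hxa hxb =>
      exists_isCrosscut hc.disj (hc.notMem₂ hx) (hc.mem_interior hx hxa hxb)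
        (hdec.arcTo hc hx hxa hxb).1 (hdec.arcTo hc hx hxa hxb).2
    have harc : ∀ x ∈ K, x ≠ a → x ≠ b → (∃ α, IsHalfArc D₁ (1 / 2, 0) x α) ∧
        ∃ β, IsHalfArc D₂ (1 / 2, 1) x β := fun x hx hxa hxb =>
      (hdec.arcTo hc hx hxa hxb).imp ArcTo.exists_isHalfArc ArcTo.exists_isHalfArc
    have hbdd : ∀ p : ℝ × ℝ → Prop, Bornology.IsBounded {z | z ∈ K ∧ p z} := fun p =>
      hc.isCompact_K.isBounded.subset fun z hz => hz.1
    refine ⟨fun z₀ hz₀ hzb ε hε => ?_, fun z₀ hz₀ hza ε hε => ?_⟩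
    · obtain ⟨y, hy, hlt, hdiam⟩ := hc.exists_cutLt_right harc hdec.left_mem_closure hz₀ hzb hε
      refine ⟨y, hy, kle_of_cutLt hc hcross hy hz₀ hlt, hlt.1,
        (diam_mono (fun z hz => ?_) (hbdd _)).trans_lt hdiam⟩
      exact ⟨hz.1, cutLt_of_kle hc hz₀ hz.2.1, cutLt_of_kle hc hz.1 hz.2.2⟩
    · obtain ⟨y, hy, hlt, hdiam⟩ := hc.exists_cutLt_left harc hdec.right_mem_closure hz₀ hza hε
      refine ⟨y, hy, kle_of_cutLt hc hcross hz₀ hy hlt, hlt.1,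
        (diam_mono (fun z hz => ?_) (hbdd _)).trans_lt hdiam⟩
      exact ⟨hz.1, (cutLt_of_kle hc hz.1 hz.2.2).imp_left Eq.symm,
        (cutLt_of_kle hc hy hz.2.1).imp_left Eq.symm⟩
  · push Not at hφ
    obtain ⟨w, hw, hwa, hwb⟩ := hdec.exists_ne
    simp only [kle_iff_of_not_isCrosscut hφ]
    refine ⟨fun z₀ hz₀ hzb ε hε => ?_, fun z₀ hz₀ hza ε hε => ?_⟩
    · by_cases hza : z₀ = a
      · refine ⟨w, hw, Or.inl hza, hza ▸ hwa.symm, ?_⟩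
        rwa [diam_subsingleton (subsingleton_singleton.anti (t := {a}) fun z hz =>
          hz.2.2.resolve_right hwb)]
      · refine ⟨b, hb, Or.inr rfl, hzb, ?_⟩
        rwa [diam_subsingleton (subsingleton_singleton.anti (t := {b}) fun z hz =>
          hz.2.1.resolve_left hza)]
    · by_cases hzb : z₀ = b
      · refine ⟨w, hw, Or.inr hzb, hzb ▸ hwb, ?_⟩
        rwa [diam_subsingleton (subsingleton_singleton.anti (t := {b}) fun z hz =>
          hz.2.1.resolve_left hwa)]
      · refine ⟨a, ha, Or.inl rfl, Ne.symm hza, ?_⟩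
        rwa [diam_subsingleton (subsingleton_singleton.anti (t := {a}) fun z hz =>
          hz.2.2.resolve_right hzb)]
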